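/- arXiv:1506.02789 — 6 statements merged into one kernel-verified Lean document; each statement's English description precedes it below -/
import Mathlib

section
/- Let (Ω, ℱ, P) be a probability space and let u ∈ 𝒞 with growth constants C_u, m_u. For each k ∈ ℕ let Γ_k be a set, and for i = 1, 2 and each γ ∈ Γ_k let (W^i(k,γ), φ^i(k,γ), S^i(k,γ)) be a D-valued random variable. Assume there exist m₁, m₂, m₃ > 0 such that lim_{k→∞} sup_{γ∈Γ_k} E[|W¹(k,γ) − W²(k,γ)|^{m₁} + |φ¹(k,γ) − φ²(k,γ)|^{m₂} + |S¹(k,γ) − S²(k,γ)|^{m₃}] = 0, and there exists m₄ > m_u such that Σ_{i=1}^{2} sup_{k∈ℕ} sup_{γ∈Γ_k} E[|W^i(k,γ)|^{m₄} + (S^i(k,γ))^{m₄}] < ∞. Then lim_{k→∞} sup_{γ∈Γ_k} |E[u(W¹(k,γ), φ¹(k,γ), S¹(k,γ))] − E[u(W²(k,γ), φ²(k,γ), S²(k,γ))]| = 0. -/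
open MeasureTheory Filter Set

/-- Membership in the class 𝒞 of utility functions on
`D = ℝ × [0,Φ₀] × [0,∞)`: non-negative, continuous on `D`, non-decreasing in
each of the three variables, and of polynomial growth with constants `Cu, mu`. -/
structure MemC (Φ₀ : ℝ) (u : ℝ → ℝ → ℝ → ℝ) (Cu mu : ℝ) : Prop where
  nonneg : ∀ w φ s, φ ∈ Set.Icc 0 Φ₀ → 0 ≤ s → 0 ≤ u w φ s
  continuousOn : ContinuousOn (fun p : ℝ × ℝ × ℝ => u p.1 p.2.1 p.2.2)
    {p : ℝ × ℝ × ℝ | p.2.1 ∈ Set.Icc 0 Φ₀ ∧ 0 ≤ p.2.2}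
  mono_w : ∀ w₁ w₂ φ s, w₁ ≤ w₂ → φ ∈ Set.Icc 0 Φ₀ → 0 ≤ s → u w₁ φ s ≤ u w₂ φ s
  mono_phi : ∀ w φ₁ φ₂ s, φ₁ ≤ φ₂ → φ₁ ∈ Set.Icc 0 Φ₀ → φ₂ ∈ Set.Icc 0 Φ₀ → 0 ≤ s →
    u w φ₁ s ≤ u w φ₂ s
  mono_s : ∀ w φ s₁ s₂, s₁ ≤ s₂ → φ ∈ Set.Icc 0 Φ₀ → 0 ≤ s₁ → u w φ s₁ ≤ u w φ s₂
  growth : ∀ w φ s, φ ∈ Set.Icc 0 Φ₀ → 0 ≤ s → u w φ s ≤ Cu * (1 + |w| ^ mu + s ^ mu)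

/-!
Let `V` be the moment weight `|w| ^ m₄ + s ^ m₄` and `ρ` the discrepancy
`|w - w'| ^ m₁ + |φ - φ'| ^ m₂ + |s - s'| ^ m₃`. On the state space `u = o(V)` at infinity, and
`u` is uniformly continuous near any compact set, where smallness of `ρ` measures closeness. Hence
for every `a > 0` there is `C` with `|u x - u y| ≤ a * (1 + V x + V y) + C * ρ x y` on the whole
state space. Taking expectations, the first term is small uniformly by the moment bound, and then
the second one by the convergence of the discrepancies.
-/

open Asymptotics
open scoped Topology Uniformity

section PointwiseBounds

variable {S E : Type*} [NormedAddCommGroup E] {f : S → E} {V : S → ℝ} {c : ℝ}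

lemma exists_norm_le_add_mul_of_isBigOWith [TopologicalSpace S] (hf : Continuous f)
    (hV : 0 ≤ V) (hc : 0 ≤ c) (hfV : IsBigOWith c (cocompact S) f V) :
    ∃ B, 0 ≤ B ∧ ∀ x, ‖f x‖ ≤ B + c * V x := by
  obtain ⟨K, hK, hKc⟩ := mem_cocompact.1 hfV.bound
  obtain ⟨B, hB⟩ := hK.exists_bound_of_continuousOn hf.continuousOn
  refine ⟨max B 0, le_max_right B 0, fun x => ?_⟩
  have hcV : 0 ≤ c * V x := mul_nonneg hc (hV x)
  by_cases hx : x ∈ K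
  · linarith [hB x hx, le_max_left B 0]
  · have hfx : ‖f x‖ ≤ c * ‖V x‖ := hKc hx
    rw [Real.norm_of_nonneg (hV x)] at hfx
    linarith [le_max_right B 0]

lemma exists_pos_forall_norm_sub_le_of_lt [UniformSpace S] {ρ : S × S → ℝ}
    (hf : Continuous f) (hV : 0 ≤ V) (hfV : f =o[cocompact S] V) (hρ : 0 ≤ ρ)
    (hρu : comap ρ (𝓝 0) ≤ 𝓤 S) (hc : 0 < c) :
    ∃ δ > 0, ∀ x y, ρ (x, y) < δ → ‖f x - f y‖ ≤ c * (1 + V x + V y) := by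
  obtain ⟨K, hK, hKc⟩ := mem_cocompact.1 (hfV.def hc)
  have houtside : ∀ x ∉ K, ‖f x‖ ≤ c * V x := fun x hx => by
    have hfx : ‖f x‖ ≤ c * ‖V x‖ := hKc hx
    rwa [Real.norm_of_nonneg (hV x)] at hfx
  have hnear : {p : S × S | p.1 ∈ K → dist (f p.1) (f p.2) < c} ∈ 𝓤 S :=
    hK.uniformContinuousAt_of_continuousAt f (fun _ _ => hf.continuousAt)
      (Metric.dist_mem_uniformity hc)
  obtain ⟨δ, hδ, hδu⟩ := (Metric.nhds_basis_ball.comap ρ).mem_iff.1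
    (hρu (inter_mem hnear (symm_le_uniformity hnear)))
  refine ⟨δ, hδ, fun x y hxy => ?_⟩
  have hmem : (x, y) ∈ ρ ⁻¹' Metric.ball 0 δ := by
    rwa [mem_preimage, mem_ball_zero_iff, Real.norm_of_nonneg (hρ _)]
  obtain ⟨hx, hy⟩ : (x ∈ K → dist (f x) (f y) < c) ∧ (y ∈ K → dist (f y) (f x) < c) := hδu hmem
  rw [dist_comm (f y), dist_eq_norm] at hy
  rw [dist_eq_norm] at hx
  have hcVx : 0 ≤ c * V x := mul_nonneg hc.le (hV x)
  have hcVy : 0 ≤ c * V y := mul_nonneg hc.le (hV y)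
  by_cases hxK : x ∈ K
  · linarith [hx hxK]
  by_cases hyK : y ∈ K
  · linarith [hy hyK]
  linarith [norm_sub_le (f x) (f y), houtside x hxK, houtside y hyK]

lemma exists_norm_sub_le_mul_add_mul [UniformSpace S] {ρ : S × S → ℝ}
    (hf : Continuous f) (hV : 0 ≤ V) (hfV : f =o[cocompact S] V) (hρ : 0 ≤ ρ)
    (hρu : comap ρ (𝓝 0) ≤ 𝓤 S) (hc : 0 < c) :
    ∃ C, 0 ≤ C ∧ ∀ x y, ‖f x - f y‖ ≤ c * (1 + V x + V y) + C * ρ (x, y) := by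
  obtain ⟨B, hB, hfB⟩ := exists_norm_le_add_mul_of_isBigOWith hf hV hc.le (hfV.def' hc)
  obtain ⟨δ, hδ, hnear⟩ := exists_pos_forall_norm_sub_le_of_lt hf hV hfV hρ hρu hc
  refine ⟨2 * B / δ, by positivity, fun x y => ?_⟩
  rcases lt_or_ge (ρ (x, y)) δ with hlt | hge
  · have hCρ : 0 ≤ 2 * B / δ * ρ (x, y) := mul_nonneg (by positivity) (hρ _)
    linarith [hnear x y hlt]
  · have hCρ : 2 * B ≤ 2 * B / δ * ρ (x, y) := by
      rw [div_mul_eq_mul_div, le_div_iff₀ hδ]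
      gcongr
    linarith [norm_sub_le (f x) (f y), hfB x, hfB y]

end PointwiseBounds

section Expectations

variable {Ω S E : Type*} [MeasurableSpace Ω] {P : Measure Ω} [IsFiniteMeasure P]
  [NormedAddCommGroup E] {f : S → E} {V : S → ℝ}

lemma integrable_comp_of_isBigO_cocompact [TopologicalSpace S] {X : Ω → S} (hf : Continuous f)
    (hV : 0 ≤ V) (hfV : f =O[cocompact S] V) (hX : AEStronglyMeasurable X P)
    (hVX : Integrable (fun ω => V (X ω)) P) : Integrable (fun ω => f (X ω)) P := by
  obtain ⟨c, hc, hfc⟩ := hfV.exists_nonneg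
  obtain ⟨B, -, hfB⟩ := exists_norm_le_add_mul_of_isBigOWith hf hV hc hfc
  exact ((integrable_const B).add (hVX.const_mul c)).mono' (hf.comp_aestronglyMeasurable hX)
    (ae_of_all P fun ω => hfB (X ω))

variable [NormedSpace ℝ E] {ρ : S × S → ℝ}

lemma norm_integral_sub_integral_le_of_norm_sub_le {X Y : Ω → S} {c C : ℝ}
    (hfX : Integrable (fun ω => f (X ω)) P) (hfY : Integrable (fun ω => f (Y ω)) P)
    (hVX : Integrable (fun ω => V (X ω)) P) (hVY : Integrable (fun ω => V (Y ω)) P)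
    (hρXY : Integrable (fun ω => ρ (X ω, Y ω)) P)
    (hbound : ∀ x y, ‖f x - f y‖ ≤ c * (1 + V x + V y) + C * ρ (x, y)) :
    ‖(∫ ω, f (X ω) ∂P) - ∫ ω, f (Y ω) ∂P‖ ≤
      c * (P.real univ + (∫ ω, V (X ω) ∂P) + ∫ ω, V (Y ω) ∂P) + C * ∫ ω, ρ (X ω, Y ω) ∂P := by
  have hone : Integrable (fun _ : Ω => (1 : ℝ)) P := integrable_const 1
  have hone_add : Integrable (fun ω => 1 + V (X ω)) P := hone.add hVX
  have hweight : Integrable (fun ω => 1 + V (X ω) + V (Y ω)) P := hone_add.add hVY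
  calc ‖(∫ ω, f (X ω) ∂P) - ∫ ω, f (Y ω) ∂P‖
      = ‖∫ ω, (f (X ω) - f (Y ω)) ∂P‖ := by rw [integral_sub hfX hfY]
    _ ≤ ∫ ω, (c * (1 + V (X ω) + V (Y ω)) + C * ρ (X ω, Y ω)) ∂P :=
      norm_integral_le_of_norm_le ((hweight.const_mul c).add (hρXY.const_mul C))
        (ae_of_all P fun ω => hbound (X ω) (Y ω))
    _ = c * (P.real univ + (∫ ω, V (X ω) ∂P) + ∫ ω, V (Y ω) ∂P)
        + C * ∫ ω, ρ (X ω, Y ω) ∂P := by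
      rw [integral_add (hweight.const_mul c) (hρXY.const_mul C), integral_const_mul,
        integral_const_mul, integral_add hone_add hVY, integral_add hone hVX,
        integral_const, smul_eq_mul, mul_one]

variable (P) in
lemma exists_pos_forall_norm_integral_sub_integral_le [UniformSpace S]
    (hf : Continuous f) (hV : 0 ≤ V) (hfV : f =o[cocompact S] V) (hρ : 0 ≤ ρ)
    (hρu : comap ρ (𝓝 0) ≤ 𝓤 S) (M : ℝ) {ε : ℝ} (hε : 0 < ε) :
    ∃ η > 0, ∀ X Y : Ω → S, AEStronglyMeasurable X P → AEStronglyMeasurable Y P →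
      Integrable (fun ω => V (X ω)) P → Integrable (fun ω => V (Y ω)) P →
      Integrable (fun ω => ρ (X ω, Y ω)) P →
      ∫ ω, V (X ω) ∂P ≤ M → ∫ ω, V (Y ω) ∂P ≤ M → ∫ ω, ρ (X ω, Y ω) ∂P ≤ η →
      ‖(∫ ω, f (X ω) ∂P) - ∫ ω, f (Y ω) ∂P‖ ≤ ε := by
  obtain ⟨c, hc, hcε⟩ := exists_pos_mul_lt (half_pos hε) (P.real univ + M + M)
  obtain ⟨C, hC, hbound⟩ := exists_norm_sub_le_mul_add_mul hf hV hfV hρ hρu hc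
  obtain ⟨η, hη, hηε⟩ := exists_pos_mul_lt (half_pos hε) C
  refine ⟨η, hη, fun X Y hX hY hVX hVY hρXY hMX hMY hηXY => ?_⟩
  have hfX := integrable_comp_of_isBigO_cocompact hf hV hfV.isBigO hX hVX
  have hfY := integrable_comp_of_isBigO_cocompact hf hV hfV.isBigO hY hVY
  calc ‖(∫ ω, f (X ω) ∂P) - ∫ ω, f (Y ω) ∂P‖
      ≤ c * (P.real univ + (∫ ω, V (X ω) ∂P) + ∫ ω, V (Y ω) ∂P)
        + C * ∫ ω, ρ (X ω, Y ω) ∂P :=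
      norm_integral_sub_integral_le_of_norm_sub_le hfX hfY hVX hVY hρXY hbound
    _ ≤ c * (P.real univ + M + M) + C * η := by gcongr
    _ ≤ ε := by linarith

end Expectations

lemma isLittleO_rpow_rpow_atTop {a b : ℝ} (hab : a < b) :
    (fun x : ℝ => x ^ a) =o[atTop] fun x => x ^ b := by
  refine (isLittleO_iff_tendsto' ?_).2 ((tendsto_rpow_neg_atTop (sub_pos.2 hab)).congr' ?_)
  · filter_upwards [eventually_gt_atTop 0] with x hx hxb
    exact absurd hxb (Real.rpow_pos_of_pos hx b).ne'
  · filter_upwards [eventually_gt_atTop 0] with x hx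
    rw [neg_sub, Real.rpow_sub hx]

lemma tendsto_zero_of_tendsto_rpow_zero {α : Type*} {l : Filter α} {g : α → ℝ} {m : ℝ}
    (hg : 0 ≤ g) (hm : 0 < m) (hgm : Tendsto (fun a => g a ^ m) l (𝓝 0)) : Tendsto g l (𝓝 0) := by
  have hroot := hgm.rpow_const (p := m⁻¹) (Or.inr (inv_pos.2 hm).le)
  rw [Real.zero_rpow (inv_pos.2 hm).ne'] at hroot
  exact hroot.congr fun a => Real.rpow_rpow_inv (hg a) hm.ne'

/-- The state space `D = ℝ × [0, Φ₀] × [0, ∞)` of the triples `(w, φ, s)`. -/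
def utilityDomain (Φ₀ : ℝ) : Set (ℝ × ℝ × ℝ) :=
  {p | p.2.1 ∈ Icc 0 Φ₀ ∧ 0 ≤ p.2.2}

/-- The weight `|w| ^ m + s ^ m`, whose expectation is the `m`-th moment of a `D`-valued random
variable. It omits the coordinate `φ`, which is bounded on `D`. -/
noncomputable def momentWeight (m : ℝ) (p : ℝ × ℝ × ℝ) : ℝ :=
  |p.1| ^ m + p.2.2 ^ m

/-- The discrepancy `|w - w'| ^ m₁ + |φ - φ'| ^ m₂ + |s - s'| ^ m₃` of two triples, through which
the distance of two random variables is measured; it is not a metric in general. -/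
noncomputable def discrepancy (m₁ m₂ m₃ : ℝ) (p q : ℝ × ℝ × ℝ) : ℝ :=
  |p.1 - q.1| ^ m₁ + |p.2.1 - q.2.1| ^ m₂ + |p.2.2 - q.2.2| ^ m₃

lemma discrepancy_nonneg (m₁ m₂ m₃ : ℝ) (p q : ℝ × ℝ × ℝ) : 0 ≤ discrepancy m₁ m₂ m₃ p q := by
  unfold discrepancy
  positivity

lemma comap_discrepancy_le_uniformity {m₁ m₂ m₃ : ℝ} (hm₁ : 0 < m₁) (hm₂ : 0 < m₂)
    (hm₃ : 0 < m₃) :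
    comap (fun p : (ℝ × ℝ × ℝ) × ℝ × ℝ × ℝ => discrepancy m₁ m₂ m₃ p.1 p.2) (𝓝 0) ≤
      𝓤 (ℝ × ℝ × ℝ) := by
  rw [Metric.uniformity_eq_comap_nhds_zero, ← tendsto_iff_comap]
  set l := comap (fun p : (ℝ × ℝ × ℝ) × ℝ × ℝ × ℝ => discrepancy m₁ m₂ m₃ p.1 p.2) (𝓝 0)
  have hcoord : ∀ (m : ℝ) (g : (ℝ × ℝ × ℝ) × ℝ × ℝ × ℝ → ℝ), 0 < m →
      (∀ p, |g p| ^ m ≤ discrepancy m₁ m₂ m₃ p.1 p.2) → Tendsto (fun p => |g p|) l (𝓝 0) :=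
    fun m g hm hg => tendsto_zero_of_tendsto_rpow_zero (fun p => abs_nonneg (g p)) hm
      (squeeze_zero (fun p => by positivity) hg tendsto_comap)
  have hw := hcoord m₁ (fun p => p.1.1 - p.2.1) hm₁ fun p => by
    rw [discrepancy, add_assoc]
    exact le_add_of_nonneg_right (by positivity)
  have hφ := hcoord m₂ (fun p => p.1.2.1 - p.2.2.1) hm₂ fun p => by
    rw [discrepancy, add_right_comm]
    exact le_add_of_nonneg_left (by positivity)
  have hs := hcoord m₃ (fun p => p.1.2.2 - p.2.2.2) hm₃ fun p =>
    le_add_of_nonneg_left (by positivity)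
  simpa only [Prod.dist_eq, Real.dist_eq, max_self] using hw.max (hφ.max hs)

section UtilityDomain

variable {Φ₀ : ℝ}

lemma isClosed_utilityDomain (Φ₀ : ℝ) : IsClosed (utilityDomain Φ₀) :=
  (isClosed_Icc.preimage (continuous_fst.comp continuous_snd)).inter
    (isClosed_Ici.preimage (continuous_snd.comp continuous_snd))

lemma momentWeight_nonneg (m : ℝ) {p : ℝ × ℝ × ℝ} (hp : p ∈ utilityDomain Φ₀) :
    0 ≤ momentWeight m p :=
  add_nonneg (by positivity) (Real.rpow_nonneg hp.2 m)

lemma momentWeight_le_two_mul_norm_rpow {m : ℝ} (hm : 0 ≤ m) {p : ℝ × ℝ × ℝ}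
    (hp : p ∈ utilityDomain Φ₀) : momentWeight m p ≤ 2 * ‖p‖ ^ m := by
  have hw : |p.1| ^ m ≤ ‖p‖ ^ m :=
    Real.rpow_le_rpow (abs_nonneg _) (norm_fst_le p) hm
  have hs : p.2.2 ^ m ≤ ‖p‖ ^ m :=
    Real.rpow_le_rpow hp.2 ((le_abs_self _).trans ((norm_snd_le p.2).trans (norm_snd_le p))) hm
  unfold momentWeight
  linarith

lemma norm_rpow_le_momentWeight (m : ℝ) {p : ℝ × ℝ × ℝ} (hp : p ∈ utilityDomain Φ₀)
    (hpΦ : Φ₀ < ‖p‖) : ‖p‖ ^ m ≤ momentWeight m p := by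
  obtain ⟨⟨hφ₀, hφ⟩, hs⟩ := hp
  have hnorm : ‖p‖ = max |p.1| (max p.2.1 p.2.2) := by
    simp only [Prod.norm_def, Real.norm_eq_abs, abs_of_nonneg hφ₀, abs_of_nonneg hs]
  rcases max_cases |p.1| (max p.2.1 p.2.2) with ⟨hmax, -⟩ | ⟨hmax, -⟩
  · rw [hnorm, hmax]
    exact le_add_of_nonneg_right (Real.rpow_nonneg hs m)
  · rcases max_cases p.2.1 p.2.2 with ⟨hmax', -⟩ | ⟨hmax', -⟩
    · exact absurd hpΦ (by rw [hnorm, hmax, hmax']; exact not_lt.2 hφ)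
    · rw [hnorm, hmax, hmax']
      exact le_add_of_nonneg_left (by positivity)

lemma tendsto_norm_cocompact_utilityDomain (Φ₀ : ℝ) :
    Tendsto (fun p : utilityDomain Φ₀ => ‖(p : ℝ × ℝ × ℝ)‖) (cocompact (utilityDomain Φ₀)) atTop :=
  (tendsto_norm_cocompact_atTop (E := ℝ × ℝ × ℝ)).comp
    (isClosed_utilityDomain Φ₀).isClosedEmbedding_subtypeVal.tendsto_cocompact

lemma isLittleO_momentWeight_of_growth {E : Type*} [NormedAddCommGroup E]
    {u : utilityDomain Φ₀ → E} {C m m' : ℝ} (hm : 0 ≤ m) (hmm' : m < m')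
    (hu : ∀ p : utilityDomain Φ₀, ‖u p‖ ≤ C * (1 + momentWeight m p)) :
    u =o[cocompact (utilityDomain Φ₀)] fun p => momentWeight m' p := by
  have hnorm := tendsto_norm_cocompact_utilityDomain Φ₀
  have hupper : u =O[cocompact (utilityDomain Φ₀)] fun p => ‖(p : ℝ × ℝ × ℝ)‖ ^ m := by
    refine .of_bound (|C| * 3) ?_
    filter_upwards [hnorm.eventually_ge_atTop 1] with p hp
    have hone : 1 ≤ ‖(p : ℝ × ℝ × ℝ)‖ ^ m := Real.one_le_rpow hp hm
    have hweight := momentWeight_le_two_mul_norm_rpow hm p.2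
    have hweight₀ := momentWeight_nonneg m p.2
    calc ‖u p‖ ≤ C * (1 + momentWeight m p) := hu p
      _ ≤ |C| * (1 + momentWeight m p) := by gcongr; exact le_abs_self C
      _ ≤ |C| * (3 * ‖(p : ℝ × ℝ × ℝ)‖ ^ m) := by gcongr; linarith
      _ = |C| * 3 * ‖‖(p : ℝ × ℝ × ℝ)‖ ^ m‖ := by
        rw [mul_assoc, Real.norm_of_nonneg (by positivity)]
  have hlower : (fun p : utilityDomain Φ₀ => ‖(p : ℝ × ℝ × ℝ)‖ ^ m')
      =O[cocompact (utilityDomain Φ₀)] fun p => momentWeight m' p := by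
    refine .of_norm_eventuallyLE ?_
    filter_upwards [hnorm.eventually_gt_atTop Φ₀] with p hp
    rw [Real.norm_of_nonneg (by positivity)]
    exact norm_rpow_le_momentWeight m' p.2 hp
  exact hupper.trans_isLittleO
    (((isLittleO_rpow_rpow_atTop hmm').comp_tendsto hnorm).trans_isBigO hlower)

lemma comap_discrepancy_le_uniformity_utilityDomain {m₁ m₂ m₃ : ℝ} (hm₁ : 0 < m₁) (hm₂ : 0 < m₂)
    (hm₃ : 0 < m₃) :
    comap (fun p : utilityDomain Φ₀ × utilityDomain Φ₀ => discrepancy m₁ m₂ m₃ p.1 p.2) (𝓝 0) ≤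
      𝓤 (utilityDomain Φ₀) := by
  rw [uniformity_subtype]
  refine le_trans ?_ (comap_mono (comap_discrepancy_le_uniformity hm₁ hm₂ hm₃))
  rw [comap_comap]
  rfl

end UtilityDomain

theorem uniform_convergence_of_expected_utility_general
    {Ω ι : Type*} [MeasurableSpace Ω] {P : Measure Ω} [IsFiniteMeasure P]
    {l : Filter ι} {Γ : ι → Type*}
    {Φ₀ : ℝ} {u : utilityDomain Φ₀ → ℝ} (hu : Continuous u)
    {C mu : ℝ} (hmu : 0 ≤ mu)
    (hgrowth : ∀ p : utilityDomain Φ₀, |u p| ≤ C * (1 + momentWeight mu p))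
    {X Y : ∀ k, Γ k → Ω → utilityDomain Φ₀}
    (hX : ∀ k γ, AEStronglyMeasurable (X k γ) P) (hY : ∀ k γ, AEStronglyMeasurable (Y k γ) P)
    {m₁ m₂ m₃ : ℝ} (hm₁ : 0 < m₁) (hm₂ : 0 < m₂) (hm₃ : 0 < m₃)
    (hdiff_int : ∀ k γ, Integrable (fun ω => discrepancy m₁ m₂ m₃ (X k γ ω) (Y k γ ω)) P)
    (hdiff : ∀ ε > 0, ∀ᶠ k in l, ∀ γ, ∫ ω, discrepancy m₁ m₂ m₃ (X k γ ω) (Y k γ ω) ∂P ≤ ε)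
    {m₄ : ℝ} (hm₄ : mu < m₄)
    (hX_int : ∀ k γ, Integrable (fun ω => momentWeight m₄ (X k γ ω)) P)
    (hY_int : ∀ k γ, Integrable (fun ω => momentWeight m₄ (Y k γ ω)) P)
    {M : ℝ} (hX_mom : ∀ k γ, ∫ ω, momentWeight m₄ (X k γ ω) ∂P ≤ M)
    (hY_mom : ∀ k γ, ∫ ω, momentWeight m₄ (Y k γ ω) ∂P ≤ M) :
    ∀ ε > 0, ∀ᶠ k in l, ∀ γ, |(∫ ω, u (X k γ ω) ∂P) - ∫ ω, u (Y k γ ω) ∂P| ≤ ε := by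
  intro ε hε
  obtain ⟨η, hη, hclose⟩ := exists_pos_forall_norm_integral_sub_integral_le P hu
    (fun p => momentWeight_nonneg m₄ p.2) (isLittleO_momentWeight_of_growth hmu hm₄ hgrowth)
    (fun _ => discrepancy_nonneg m₁ m₂ m₃ _ _)
    (comap_discrepancy_le_uniformity_utilityDomain hm₁ hm₂ hm₃) M hε
  filter_upwards [hdiff η hη] with k hk γ
  exact hclose (X k γ) (Y k γ) (hX k γ) (hY k γ) (hX_int k γ) (hY_int k γ) (hdiff_int k γ)
    (hX_mom k γ) (hY_mom k γ) (hk γ)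

namespace MemC

variable {Φ₀ Cu mu : ℝ} {u : ℝ → ℝ → ℝ → ℝ}

lemma continuous_domain (hu : MemC Φ₀ u Cu mu) :
    Continuous fun p : utilityDomain Φ₀ => u p.1.1 p.1.2.1 p.1.2.2 :=
  continuousOn_iff_continuous_domRestrict.1 hu.continuousOn

lemma abs_le_momentWeight (hu : MemC Φ₀ u Cu mu) (p : utilityDomain Φ₀) :
    |u p.1.1 p.1.2.1 p.1.2.2| ≤ Cu * (1 + momentWeight mu p) := by
  obtain ⟨⟨w, φ, s⟩, hφ, hs⟩ := p
  rw [abs_of_nonneg (hu.nonneg w φ s hφ hs), momentWeight, ← add_assoc]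
  exact hu.growth w φ s hφ hs

end MemC

/-- Lemma 7.1 (lemm_conti_u): uniform convergence of expected utilities, given
uniform convergence of moment-differences and a uniform moment bound of order
`m₄ > mu`. -/
theorem uniform_convergence_of_expected_utility
    {Ω : Type*} [MeasurableSpace Ω] (P : Measure Ω) [IsProbabilityMeasure P]
    (Φ₀ : ℝ) (hΦ₀ : 0 < Φ₀)
    (u : ℝ → ℝ → ℝ → ℝ) (Cu mu : ℝ) (hCu : 0 < Cu) (hmu : 0 < mu)
    (hu : MemC Φ₀ u Cu mu)
    (Γ : ℕ → Type*)
    (W φv S : (i : Fin 2) → (k : ℕ) → Γ k → Ω → ℝ)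
    (hWmeas : ∀ i k γ, Measurable (W i k γ))
    (hφmeas : ∀ i k γ, Measurable (φv i k γ))
    (hSmeas : ∀ i k γ, Measurable (S i k γ))
    -- the triplets are `D`-valued
    (hD : ∀ i k γ ω, φv i k γ ω ∈ Set.Icc 0 Φ₀ ∧ 0 ≤ S i k γ ω)
    (m₁ m₂ m₃ : ℝ) (hm₁ : 0 < m₁) (hm₂ : 0 < m₂) (hm₃ : 0 < m₃)
    (hdiff_int : ∀ k γ, Integrable (fun ω =>
      |W 0 k γ ω - W 1 k γ ω| ^ m₁ + |φv 0 k γ ω - φv 1 k γ ω| ^ m₂ +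
        |S 0 k γ ω - S 1 k γ ω| ^ m₃) P)
    -- lim_{k→∞} sup_{γ ∈ Γ_k} E[|W¹-W²|^{m₁} + |φ¹-φ²|^{m₂} + |S¹-S²|^{m₃}] = 0
    (hdiff : ∀ ε > (0 : ℝ), ∃ K : ℕ, ∀ k ≥ K, ∀ γ : Γ k,
      (∫ ω, (|W 0 k γ ω - W 1 k γ ω| ^ m₁ + |φv 0 k γ ω - φv 1 k γ ω| ^ m₂ +
        |S 0 k γ ω - S 1 k γ ω| ^ m₃) ∂P) ≤ ε)
    (m₄ : ℝ) (hm₄ : mu < m₄)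
    (hmom_int : ∀ i k γ, Integrable (fun ω => |W i k γ ω| ^ m₄ + (S i k γ ω) ^ m₄) P)
    -- Σᵢ sup_k sup_γ E[|Wⁱ|^{m₄} + (Sⁱ)^{m₄}] < ∞
    (M : ℝ) (hmom : ∀ i k γ, (∫ ω, (|W i k γ ω| ^ m₄ + (S i k γ ω) ^ m₄) ∂P) ≤ M) :
    -- lim_{k→∞} sup_{γ ∈ Γ_k} |E[u(W¹,φ¹,S¹)] − E[u(W²,φ²,S²)]| = 0
    ∀ ε > (0 : ℝ), ∃ K : ℕ, ∀ k ≥ K, ∀ γ : Γ k,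
      |(∫ ω, u (W 0 k γ ω) (φv 0 k γ ω) (S 0 k γ ω) ∂P) -
        (∫ ω, u (W 1 k γ ω) (φv 1 k γ ω) (S 1 k γ ω) ∂P)| ≤ ε := by
  have hX_meas : ∀ i k γ, Measurable fun ω =>
      (⟨(W i k γ ω, φv i k γ ω, S i k γ ω), hD i k γ ω⟩ : utilityDomain Φ₀) := fun i k γ =>
    ((hWmeas i k γ).prodMk ((hφmeas i k γ).prodMk (hSmeas i k γ))).subtype_mk
  simp only [← eventually_atTop] at hdiff ⊢
  exact uniform_convergence_of_expected_utility_general hu.continuous_domain hmu.le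
    hu.abs_le_momentWeight
    (fun k γ => (hX_meas 0 k γ).aestronglyMeasurable)
    (fun k γ => (hX_meas 1 k γ).aestronglyMeasurable)
    hm₁ hm₂ hm₃ hdiff_int hdiff hm₄ (hmom_int 0) (hmom_int 1) (hmom 0) (hmom 1)
end

section
/- Let h : [0,∞) → [0,∞) be a non-decreasing continuous function with lim_{ζ→∞} h(ζ) = ∞, let g(ζ) = ∫₀^ζ h(ζ′) dζ′, and let g⁻¹(y) := sup{ζ ≥ 0 : g(ζ) = y}. Fix γ̃ > 0 and Φ₀ > 0. Then for every measurable function ζ : [0,1] → [0,∞) with ∫₀^1 ζ(v) dv ≤ Φ₀, every r ∈ (0,1], and every R > 0, one has ∫₀^r exp(−γ̃ ∫₀^v g(ζ(v′)) dv′) · ζ(v) dv ≤ r · g⁻¹(R/(γ̃ r)) + Φ₀ e^{−R}. -/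
open Set Filter MeasureTheory

/-!
Let `τ ≤ r` be a time at which `γ̃ ∫₀^τ g(ζ)` equals `R`, or `τ = r` if that level is not reached.
After `τ` the discount factor is at most `e^{-R}`, which accounts for `Φ₀ e^{-R}`. Up to `τ` the
factor is at most `1`, and the remaining `∫₀^τ ζ` is controlled by Jensen's inequality for `g`:
because `g 0 = 0`, one may average over `[0, r]` instead of `[0, τ]`, so
`g (r⁻¹ ∫₀^τ ζ) ≤ r⁻¹ ∫₀^τ g(ζ) ≤ R / (γ̃ r)`.
-/

section MonotoneIntegrand

variable {h : ℝ → ℝ} {a b c : ℝ}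

theorem mul_sub_le_integral_of_monotoneOn (hab : a ≤ b) (hh : MonotoneOn h (Icc a b)) :
    h a * (b - a) ≤ ∫ z in a..b, h z := by
  have hint : IntervalIntegrable h volume a b := (uIcc_of_le hab ▸ hh).intervalIntegrable
  simpa [mul_comm] using intervalIntegral.integral_mono_on hab intervalIntegrable_const hint
    fun z hz => hh (left_mem_Icc.2 hab) hz hz.1

theorem integral_le_mul_sub_of_monotoneOn (hab : a ≤ b) (hh : MonotoneOn h (Icc a b)) :
    ∫ z in a..b, h z ≤ h b * (b - a) := by
  have hint : IntervalIntegrable h volume a b := (uIcc_of_le hab ▸ hh).intervalIntegrable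
  simpa [mul_comm] using intervalIntegral.integral_mono_on hab hint intervalIntegrable_const
    fun z hz => hh hz (right_mem_Icc.2 hab) hz.2

theorem integral_pos_of_monotoneOn (hh : MonotoneOn h (Icc a c)) (ha : 0 ≤ h a) (hab : a ≤ b)
    (hbc : b < c) (hb : 0 < h b) : 0 < ∫ z in a..c, h z := by
  have hac : a ≤ c := hab.trans hbc.le
  have hint : IntervalIntegrable h volume a c := (uIcc_of_le hac ▸ hh).intervalIntegrable
  have hnonneg : ∀ z ∈ Ioc a c, 0 ≤ h z := fun z hz =>
    ha.trans (hh (left_mem_Icc.2 hac) (Ioc_subset_Icc_self hz) hz.1.le)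
  calc
    0 < h b * (c - b) := mul_pos hb (sub_pos.2 hbc)
    _ ≤ ∫ z in b..c, h z :=
      mul_sub_le_integral_of_monotoneOn hbc.le (hh.mono (Icc_subset_Icc_left hab))
    _ ≤ ∫ z in a..c, h z :=
      intervalIntegral.integral_mono_interval hab hbc.le le_rfl
        (ae_restrict_of_forall_mem measurableSet_Ioc hnonneg) hint

theorem exists_integral_pos_of_monotoneOn_of_tendsto (hh : MonotoneOn h (Ici a)) (ha : 0 ≤ h a)
    (hh_top : Tendsto h atTop atTop) : ∃ x, a ≤ x ∧ 0 < ∫ z in a..x, h z := by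
  obtain ⟨b, hab, hb⟩ : ∃ b, a ≤ b ∧ 0 < h b :=
    ((eventually_ge_atTop a).and (hh_top.eventually_gt_atTop 0)).exists
  exact ⟨b + 1, hab.trans (lt_add_one b).le,
    integral_pos_of_monotoneOn (hh.mono Icc_subset_Ici_self) ha hab (lt_add_one b) hb⟩

theorem convexOn_integral_of_monotoneOn {s : Set ℝ} (hs : OrdConnected s) (ha : a ∈ s)
    (hh : MonotoneOn h s) : ConvexOn ℝ s fun x => ∫ z in a..x, h z := by
  have hint : ∀ {x}, x ∈ s → IntervalIntegrable h volume a x := fun hx =>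
    (hh.mono (hs.uIcc_subset ha hx)).intervalIntegrable
  refine convexOn_of_slope_mono_adjacent hs.convex fun {x y z} hx hz hxy hyz => ?_
  have hy : y ∈ s := hs.out hx hz ⟨hxy.le, hyz.le⟩
  rw [intervalIntegral.integral_interval_sub_left (hint hy) (hint hx),
    intervalIntegral.integral_interval_sub_left (hint hz) (hint hy)]
  calc
    (∫ t in x..y, h t) / (y - x) ≤ h y :=
      (div_le_iff₀ (sub_pos.2 hxy)).2
        (integral_le_mul_sub_of_monotoneOn hxy.le (hh.mono (hs.out hx hy)))
    _ ≤ (∫ t in y..z, h t) / (z - y) :=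
      (le_div_iff₀ (sub_pos.2 hyz)).2
        (mul_sub_le_integral_of_monotoneOn hyz.le (hh.mono (hs.out hy hz)))

end MonotoneIntegrand

section Convex

theorem map_smul_le_of_convexOn {E : Type*} [AddCommGroup E] [Module ℝ E] {s : Set E} {g : E → ℝ}
    (hg : ConvexOn ℝ s g) (hs : 0 ∈ s) (hg_zero : g 0 ≤ 0) {x : E} (hx : x ∈ s) {θ : ℝ}
    (hθ : θ ∈ Icc 0 1) : g (θ • x) ≤ θ * g x := by
  have hconv := hg.2 hx hs hθ.1 (sub_nonneg.2 hθ.2) (add_sub_cancel θ 1)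
  rw [smul_zero, add_zero, smul_eq_mul, smul_eq_mul] at hconv
  linarith [mul_nonpos_of_nonneg_of_nonpos (sub_nonneg.2 hθ.2) hg_zero]

theorem continuousOn_Ici_of_convexOn_of_nonneg {g : ℝ → ℝ} (hg : ConvexOn ℝ (Ici 0) g)
    (hg_nonneg : ∀ x, 0 ≤ x → 0 ≤ g x) (hg_zero : g 0 = 0) : ContinuousOn g (Ici 0) := by
  refine hg.continuousOn_Ici ?_
  have hlin : Tendsto (fun x => x * g 1) (nhdsWithin 0 (Ici 0)) (nhds 0) := by
    simpa using (tendsto_id.mul_const (g 1)).mono_left (nhdsWithin_le_nhds (a := (0 : ℝ)))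
  have hle : ∀ᶠ x in nhdsWithin 0 (Ici 0), g x ≤ x * g 1 := by
    filter_upwards [Icc_mem_nhdsGE (zero_lt_one' ℝ)] with x hx
    simpa using map_smul_le_of_convexOn hg self_mem_Ici hg_zero.le (mem_Ici.2 zero_le_one) hx
  rw [ContinuousWithinAt, hg_zero]
  exact squeeze_zero' (eventually_mem_nhdsWithin.mono hg_nonneg) hle hlin

theorem tendsto_atTop_of_convexOn_of_pos {g : ℝ → ℝ} (hg : ConvexOn ℝ (Ici 0) g)
    (hg_zero : g 0 ≤ 0) {a : ℝ} (ha : 0 < a) (hga : 0 < g a) : Tendsto g atTop atTop := by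
  refine tendsto_atTop_mono' atTop ?_ (tendsto_id.atTop_mul_const (div_pos hga ha))
  filter_upwards [eventually_ge_atTop a] with x hax
  have hx : 0 < x := ha.trans_le hax
  have hchord : g (a / x * x) ≤ a / x * g x :=
    map_smul_le_of_convexOn hg self_mem_Ici hg_zero hx.le
      ⟨by positivity, div_le_one_of_le₀ hax hx.le⟩
  rw [div_mul_cancel₀ a hx.ne'] at hchord
  calc
    x * (g a / a) ≤ x * (a / x * g x / a) := by gcongr
    _ = g x := by field_simp

-- Jensen's inequality for the sub-probability measure `t⁻¹ • μ`; the missing mass sits at `0`.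
theorem map_inv_smul_integral_le {α E : Type*} [MeasurableSpace α] {μ : Measure α}
    [IsFiniteMeasure μ] [NormedAddCommGroup E] [NormedSpace ℝ E] [CompleteSpace E] {s : Set E}
    {g : E → ℝ} {f : α → E} (hg : ConvexOn ℝ s g) (hg_cont : ContinuousOn g s) (hs : IsClosed s)
    (hs_zero : 0 ∈ s) (hg_zero : g 0 ≤ 0) (hfs : ∀ᵐ x ∂μ, f x ∈ s) (hf : Integrable f μ)
    (hgf : Integrable (g ∘ f) μ) {t : ℝ} (ht : 0 < t) (hμt : μ.real univ ≤ t) :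
    g (t⁻¹ • ∫ x, f x ∂μ) ≤ t⁻¹ * ∫ x, g (f x) ∂μ := by
  rcases eq_zero_or_neZero μ with rfl | hμ
  · simpa using hg_zero
  have hθ : t⁻¹ * μ.real univ ∈ Icc (0 : ℝ) 1 :=
    ⟨by positivity, by rwa [inv_mul_le_one₀ ht]⟩
  have havg : ⨍ x, f x ∂μ ∈ s := hg.1.average_mem hs hfs hf
  calc
    g (t⁻¹ • ∫ x, f x ∂μ) = g ((t⁻¹ * μ.real univ) • ⨍ x, f x ∂μ) := by
      rw [mul_smul, measure_smul_average]
    _ ≤ t⁻¹ * μ.real univ * g (⨍ x, f x ∂μ) :=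
      map_smul_le_of_convexOn hg hs_zero hg_zero havg hθ
    _ ≤ t⁻¹ * μ.real univ * ⨍ x, g (f x) ∂μ :=
      mul_le_mul_of_nonneg_left (hg.map_average_le hg_cont hs hfs hf hgf) hθ.1
    _ = t⁻¹ * ∫ x, g (f x) ∂μ := by
      rw [mul_assoc, ← smul_eq_mul (μ.real univ), measure_smul_average]

end Convex

theorem le_sSup_level_of_le {g : ℝ → ℝ} (hg_cont : ContinuousOn g (Ici 0))
    (hg_top : Tendsto g atTop atTop) {a y : ℝ} (ha : 0 ≤ a) (hay : g a ≤ y) :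
    a ≤ sSup {x | 0 ≤ x ∧ g x = y} := by
  obtain ⟨c, hac, hc⟩ : y ∈ g '' Ici a :=
    intermediate_value_Ici (hg_cont.mono (Ici_subset_Ici.2 ha)) hg_top hay
  obtain ⟨M, hM⟩ := eventually_atTop.1 (hg_top.eventually_gt_atTop y)
  have hbdd : BddAbove {x | 0 ≤ x ∧ g x = y} :=
    ⟨M, fun x hx => le_of_not_ge fun hMx => (hM x hMx).ne' hx.2⟩
  exact (mem_Ici.1 hac).trans (le_csSup hbdd ⟨ha.trans hac, hc⟩)

section AntitoneWeight

variable {w : ℝ → ℝ} {a b ε : ℝ}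

theorem exists_le_and_forall_Ioc_le_of_antitoneOn (hab : a ≤ b) (hw : AntitoneOn w (Icc a b))
    (hw_cont : ContinuousOn w (Icc a b)) (hε : ε ≤ w a) :
    ∃ τ ∈ Icc a b, ε ≤ w τ ∧ ∀ v ∈ Ioc τ b, w v ≤ ε := by
  rcases le_total ε (w b) with hb | hb
  · exact ⟨b, right_mem_Icc.2 hab, hb, by simp⟩
  · obtain ⟨τ, hτ, rfl⟩ := intermediate_value_Icc' hab hw_cont ⟨hb, hε⟩
    exact ⟨τ, hτ, le_rfl, fun v hv => hw hτ ⟨hτ.1.trans hv.1.le, hv.2⟩ hv.1.le⟩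

theorem exists_integral_mul_le_of_antitoneOn {f : ℝ → ℝ} (hab : a ≤ b)
    (hw : AntitoneOn w (Icc a b)) (hw_cont : ContinuousOn w (Icc a b)) (hwa : w a ≤ 1)
    (hε : 0 ≤ ε) (hεw : ε ≤ w a) (hf : IntervalIntegrable f volume a b)
    (hf_nonneg : ∀ v ∈ Icc a b, 0 ≤ f v) :
    ∃ τ ∈ Icc a b, ε ≤ w τ ∧
      ∫ v in a..b, w v * f v ≤ (∫ v in a..τ, f v) + (∫ v in a..b, f v) * ε := by
  obtain ⟨τ, hτ, hετ, hτε⟩ := exists_le_and_forall_Ioc_le_of_antitoneOn hab hw hw_cont hεw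
  refine ⟨τ, hτ, hετ, ?_⟩
  have hwf : IntervalIntegrable (fun v => w v * f v) volume a b :=
    hf.continuousOn_mul (uIcc_of_le hab ▸ hw_cont)
  have hτ_mem : τ ∈ uIcc a b := Icc_subset_uIcc hτ
  have hleft : uIcc a τ ⊆ uIcc a b := uIcc_subset_uIcc_left hτ_mem
  have hright : uIcc τ b ⊆ uIcc a b := uIcc_subset_uIcc_right hτ_mem
  have hbefore : ∫ v in a..τ, w v * f v ≤ ∫ v in a..τ, f v := by
    refine intervalIntegral.integral_mono_on hτ.1 (hwf.mono_set hleft) (hf.mono_set hleft) ?_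
    intro v hv
    have hv' : v ∈ Icc a b := ⟨hv.1, hv.2.trans hτ.2⟩
    exact mul_le_of_le_one_left (hf_nonneg v hv')
      ((hw (left_mem_Icc.2 hab) hv' hv.1).trans hwa)
  have hafter : ∫ v in τ..b, w v * f v ≤ (∫ v in a..b, f v) * ε := calc
    ∫ v in τ..b, w v * f v ≤ ∫ v in τ..b, f v * ε := by
      refine intervalIntegral.integral_mono_on_of_le_Ioo hτ.2 (hwf.mono_set hright)
        ((hf.mono_set hright).mul_const ε) fun v hv => ?_
      rw [mul_comm]
      exact mul_le_mul_of_nonneg_left (hτε v (Ioo_subset_Ioc_self hv))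
        (hf_nonneg v ⟨hτ.1.trans hv.1.le, hv.2.le⟩)
    _ = (∫ v in τ..b, f v) * ε := intervalIntegral.integral_mul_const ε f
    _ ≤ (∫ v in a..b, f v) * ε := by
      refine mul_le_mul_of_nonneg_right ?_ hε
      exact intervalIntegral.integral_mono_interval hτ.1 hτ.2 le_rfl
        (ae_restrict_of_forall_mem measurableSet_Ioc
          fun v hv => hf_nonneg v (Ioc_subset_Icc_self hv)) hf
  rw [← intervalIntegral.integral_add_adjacent_intervals (hwf.mono_set hleft)
    (hwf.mono_set hright)]
  exact add_le_add hbefore hafter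

end AntitoneWeight

theorem monotoneOn_integral_of_nonneg {f : ℝ → ℝ} {a b : ℝ} (hf : IntegrableOn f (Icc a b))
    (hf_nonneg : ∀ v ∈ Icc a b, 0 ≤ f v) : MonotoneOn (fun v => ∫ t in a..v, f t) (Icc a b) := by
  intro u hu v hv huv
  have hv_sub : Icc a v ⊆ Icc a b := Icc_subset_Icc_right hv.2
  exact intervalIntegral.integral_mono_interval le_rfl hu.1 huv
    (ae_restrict_of_forall_mem measurableSet_Ioc
      fun t ht => hf_nonneg t (hv_sub (Ioc_subset_Icc_self ht)))
    ((intervalIntegrable_iff_integrableOn_Icc_of_le hv.1).2 (hf.mono_set hv_sub))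

theorem integral_le_mul_sSup_level {g : ℝ → ℝ} (hg : ConvexOn ℝ (Ici 0) g)
    (hg_nonneg : ∀ x, 0 ≤ x → 0 ≤ g x) (hg_zero : g 0 = 0) (hg_pos : ∃ x, 0 ≤ x ∧ 0 < g x)
    {α : Type*} [MeasurableSpace α] {μ : Measure α} [IsFiniteMeasure μ] {f : α → ℝ}
    (hf_nonneg : 0 ≤ᵐ[μ] f) (hf : Integrable f μ) (hgf : Integrable (g ∘ f) μ) {t y : ℝ}
    (ht : 0 < t) (hμt : μ.real univ ≤ t) (hy : ∫ x, g (f x) ∂μ ≤ t * y) :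
    ∫ x, f x ∂μ ≤ t * sSup {x | 0 ≤ x ∧ g x = y} := by
  obtain ⟨a, ha, hga⟩ := hg_pos
  have ha_pos : 0 < a := ha.lt_of_ne (by rintro rfl; exact hga.ne' hg_zero)
  have hg_cont : ContinuousOn g (Ici 0) :=
    continuousOn_Ici_of_convexOn_of_nonneg hg hg_nonneg hg_zero
  have hjensen : g (t⁻¹ * ∫ x, f x ∂μ) ≤ y :=
    (map_inv_smul_integral_le hg hg_cont isClosed_Ici self_mem_Ici hg_zero.le hf_nonneg hf hgf
      ht hμt).trans ((inv_mul_le_iff₀ ht).2 hy)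
  refine (inv_mul_le_iff₀ ht).1 (le_sSup_level_of_le hg_cont
    (tendsto_atTop_of_convexOn_of_pos hg hg_zero.le ha_pos hga) ?_ hjensen)
  exact mul_nonneg (inv_nonneg.2 ht.le) (integral_nonneg_of_ae hf_nonneg)

theorem discounted_proceeds_bound_general {g : ℝ → ℝ} (hg : ConvexOn ℝ (Ici 0) g)
    (hg_nonneg : ∀ x, 0 ≤ x → 0 ≤ g x) (hg_zero : g 0 = 0) (hg_pos : ∃ x, 0 ≤ x ∧ 0 < g x)
    {γ r R Φ : ℝ} (hγ : 0 < γ) (hr : 0 < r) (hR : 0 ≤ R) {ζ : ℝ → ℝ}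
    (hζ_nonneg : ∀ v ∈ Icc 0 r, 0 ≤ ζ v) (hζ : IntegrableOn ζ (Icc 0 r))
    (hgζ : IntegrableOn (fun v => g (ζ v)) (Icc 0 r)) (hΦ : ∫ v in (0 : ℝ)..r, ζ v ≤ Φ) :
    ∫ v in (0 : ℝ)..r, Real.exp (-(γ * ∫ v' in (0 : ℝ)..v, g (ζ v'))) * ζ v ≤
      r * sSup {x | 0 ≤ x ∧ g x = R / (γ * r)} + Φ * Real.exp (-R) := by
  have hcost_mono : MonotoneOn (fun v => γ * ∫ v' in (0 : ℝ)..v, g (ζ v')) (Icc 0 r) :=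
    fun _ hu _ hv huv => mul_le_mul_of_nonneg_left (monotoneOn_integral_of_nonneg hgζ
      (fun v hv => hg_nonneg _ (hζ_nonneg v hv)) hu hv huv) hγ.le
  have hcost_cont : ContinuousOn (fun v => γ * ∫ v' in (0 : ℝ)..v, g (ζ v')) (Icc 0 r) := by
    rw [← uIcc_of_le hr.le] at hgζ ⊢
    exact (intervalIntegral.continuousOn_primitive_interval hgζ).const_mul γ
  obtain ⟨τ, hτ, hRτ, hsplit⟩ := exists_integral_mul_le_of_antitoneOn (ε := Real.exp (-R)) hr.le
    (Real.exp_monotone.comp_antitoneOn hcost_mono.neg) hcost_cont.neg.rexp (by simp)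
    (Real.exp_pos _).le (by simpa using hR)
    ((intervalIntegrable_iff_integrableOn_Icc_of_le hr.le).2 hζ) hζ_nonneg
  have hcost : γ * ∫ v in (0 : ℝ)..τ, g (ζ v) ≤ R := neg_le_neg_iff.1 (Real.exp_le_exp.1 hRτ)
  have hτ_sub : Ioc 0 τ ⊆ Icc 0 r := Ioc_subset_Icc_self.trans (Icc_subset_Icc_right hτ.2)
  have hbefore : ∫ v in (0 : ℝ)..τ, ζ v ≤ r * sSup {x | 0 ≤ x ∧ g x = R / (γ * r)} := by
    rw [intervalIntegral.integral_of_le hτ.1] at hcost ⊢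
    refine integral_le_mul_sSup_level hg hg_nonneg hg_zero hg_pos
      (ae_restrict_of_forall_mem measurableSet_Ioc fun v hv => hζ_nonneg v (hτ_sub hv))
      (hζ.mono_set hτ_sub) (hgζ.mono_set hτ_sub) hr (by simpa [hτ.1] using hτ.2) ?_
    rw [show r * (R / (γ * r)) = R / γ by field_simp]
    exact (le_div_iff₀' hγ).2 hcost
  exact hsplit.trans (add_le_add hbefore (mul_le_mul_of_nonneg_right hΦ (Real.exp_pos _).le))

/-- The deterministic core of Lemma 7.5 (eval_0): for the driving process
`L_v = γ̃ v`, every admissible selling rate `ζ` with `∫₀^1 ζ ≤ Φ₀` satisfies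
`∫₀^r exp(−γ̃ ∫₀^v g(ζ(v′)) dv′) ζ(v) dv ≤ r g⁻¹(R/(γ̃ r)) + Φ₀ e^{−R}`
for all `r ∈ (0,1]` and `R > 0`, where `g(ζ) = ∫₀^ζ h` and
`g⁻¹(y) = sup {ζ ≥ 0 : g(ζ) = y}`. -/
theorem discounted_proceeds_bound
    (h : ℝ → ℝ)
    (h_nonneg : ∀ ζ, 0 ≤ ζ → 0 ≤ h ζ)
    (h_mono : MonotoneOn h (Set.Ici 0))
    (h_cont : ContinuousOn h (Set.Ici 0))
    (h_top : Tendsto h atTop atTop)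
    (g : ℝ → ℝ) (hg : ∀ ζ, g ζ = ∫ z in (0:ℝ)..ζ, h z)
    (gInv : ℝ → ℝ) (hgInv : ∀ y, gInv y = sSup {ζ : ℝ | 0 ≤ ζ ∧ g ζ = y})
    (γt Φ₀ : ℝ) (hγt : 0 < γt) (hΦ₀ : 0 < Φ₀)
    (ζ : ℝ → ℝ) (hζ_meas : Measurable ζ) (hζ_nonneg : ∀ v, 0 ≤ ζ v)
    (hζ_int : IntegrableOn ζ (Set.Icc 0 1))
    (hgζ_int : IntegrableOn (fun v => g (ζ v)) (Set.Icc 0 1))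
    (hζ_tot : (∫ v in (0:ℝ)..1, ζ v) ≤ Φ₀)
    (r : ℝ) (hr : r ∈ Set.Ioc (0:ℝ) 1) (R : ℝ) (hR : 0 < R) :
    (∫ v in (0:ℝ)..r, Real.exp (-(γt * ∫ v' in (0:ℝ)..v, g (ζ v'))) * ζ v) ≤
      r * gInv (R / (γt * r)) + Φ₀ * Real.exp (-R) := by
  obtain rfl : g = fun x => ∫ z in (0 : ℝ)..x, h z := funext hg
  have hr_sub : Icc 0 r ⊆ Icc 0 1 := Icc_subset_Icc_right hr.2
  have hζ_tot_r : ∫ v in (0 : ℝ)..r, ζ v ≤ Φ₀ :=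
    (monotoneOn_integral_of_nonneg hζ_int (fun v _ => hζ_nonneg v) (Ioc_subset_Icc_self hr)
      (right_mem_Icc.2 zero_le_one) hr.2).trans hζ_tot
  rw [hgInv]
  exact discounted_proceeds_bound_general
    (convexOn_integral_of_monotoneOn ordConnected_Ici self_mem_Ici h_mono)
    (fun x hx => intervalIntegral.integral_nonneg hx fun z hz => h_nonneg z hz.1)
    intervalIntegral.integral_same
    (exists_integral_pos_of_monotoneOn_of_tendsto h_mono (h_nonneg 0 le_rfl) h_top)
    hγt hr.1 hR.le (fun v _ => hζ_nonneg v) (hζ_int.mono_set hr_sub) (hgζ_int.mono_set hr_sub)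
    hζ_tot_r
end

section
/- Let h : [0,∞) → [0,∞) be a non-decreasing continuous function with lim_{ζ→∞} h(ζ) = ∞, let g(ζ) = ∫₀^ζ h(ζ′) dζ′, let g⁻¹(y) := sup{ζ ≥ 0 : g(ζ) = y}, and fix γ̃ > 0. Define f(ζ) = ζ · √(h(ζ/2)), f⁻¹(y) := sup{ζ ≥ 0 : f(ζ) = y}, M(r) = f⁻¹(1/r), and R(r) = γ̃ r g(M(r)) for r ∈ (0,1]. Then R(r) → ∞ and r · g⁻¹(R(r)/(γ̃ r)) → 0 as r ↓ 0. -/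
open Set Filter MeasureTheory

/-!
Put `m = M(r)`, so that `r m √(h(m/2)) = 1`, and `m → ∞` as `r ↓ 0`. Beyond `m` the function `g` is
strictly increasing, hence `g⁻¹(R(r)/(γ̃ r)) = g⁻¹(g(m)) = m`, and `r m = 1/√(h(m/2)) → 0`.
Discarding the first half of the integral gives `g(m) ≥ (m/2) h(m/2)`, hence
`R(r) ≥ (γ̃/2) (r m √(h(m/2))) √(h(m/2)) = (γ̃/2) √(h(m/2)) → ∞`.
-/

section GenInv

variable {α β : Type*}

theorem bddAbove_levelSet [LinearOrder α] [Preorder β] [NoMaxOrder β] {a : α} {φ : α → β}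
    (hφ : Tendsto φ atTop atTop) (y : β) : BddAbove {x | a ≤ x ∧ φ x = y} := by
  have : Nonempty α := ⟨a⟩
  obtain ⟨b, hb⟩ := eventually_atTop.1 (hφ.eventually_gt_atTop y)
  refine ⟨b, fun x ⟨_, hx⟩ => ?_⟩
  by_contra! hbx
  exact (hb x hbx.le).ne' hx

variable [ConditionallyCompleteLinearOrder α] {a : α} {φ : α → β}

/-- The generalized inverse of the restriction of `φ` to `[a, ∞)`, sending `y` to the supremum of
its level set; the value is junk when the level set is empty or unbounded. With `a = 0` this is the
paper's `g⁻¹` and `f⁻¹`. -/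
noncomputable def genInv (a : α) (φ : α → β) (y : β) : α :=
  sSup {x | a ≤ x ∧ φ x = y}

theorem genInv_apply_of_strictMonoOn [Preorder β] {x : α} (hx : a ≤ x)
    (hφ : StrictMonoOn φ (Ici x)) : genInv a φ (φ x) = x := by
  refine IsGreatest.csSup_eq ⟨⟨hx, rfl⟩, fun z ⟨_, hz⟩ => ?_⟩
  by_contra! hxz
  exact (hφ self_mem_Ici hxz.le hxz).ne' hz

variable [TopologicalSpace α] [OrderTopology α] [DenselyOrdered α]
  [LinearOrder β] [NoMaxOrder β] [TopologicalSpace β] [OrderClosedTopology β]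

theorem apply_genInv (hφ : ContinuousOn φ (Ici a))
    (hφ_top : Tendsto φ atTop atTop) {y : β} (hy : φ a ≤ y) : φ (genInv a φ y) = y :=
  ((hφ.preimage_isClosed_of_isClosed isClosed_Ici isClosed_singleton).csSup_mem
    (intermediate_value_Ici hφ hφ_top hy) (bddAbove_levelSet hφ_top y)).2

theorem tendsto_genInv_atTop (hφ : ContinuousOn φ (Ici a))
    (hφ_top : Tendsto φ atTop atTop) : Tendsto (genInv a φ) atTop atTop := by
  refine tendsto_atTop.2 fun b => ?_
  have hab : a ≤ max a b := le_max_left a b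
  filter_upwards [eventually_ge_atTop (φ (max a b))] with y hy
  obtain ⟨x, hx, hxy⟩ := intermediate_value_Ici (hφ.mono (Ici_subset_Ici.2 hab)) hφ_top hy
  exact (le_max_right a b).trans <|
    hx.trans <| le_csSup (bddAbove_levelSet hφ_top y) ⟨hab.trans hx, hxy⟩

end GenInv

section MonotoneIntegrand

variable {h : ℝ → ℝ} {a b c : ℝ}

theorem intervalIntegrable_of_monotoneOn_Icc (hh : MonotoneOn h (Icc a b)) (hab : a ≤ b) :
    IntervalIntegrable h volume a b :=
  MonotoneOn.intervalIntegrable (by rwa [uIcc_of_le hab])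

theorem sub_mul_le_integral_of_monotoneOn (hh : MonotoneOn h (Icc a b)) (hab : a ≤ b) :
    (b - a) * h a ≤ ∫ x in a..b, h x :=
  calc (b - a) * h a = ∫ _ in a..b, h a := by simp
    _ ≤ ∫ x in a..b, h x :=
        intervalIntegral.integral_mono_on hab intervalIntegrable_const
          (intervalIntegrable_of_monotoneOn_Icc hh hab)
          fun x hx => hh (left_mem_Icc.2 hab) hx hx.1

theorem integral_add_sub_mul_le_of_monotoneOn (hh : MonotoneOn h (Icc a c)) (hab : a ≤ b)
    (hbc : b ≤ c) : (∫ x in a..b, h x) + (c - b) * h b ≤ ∫ x in a..c, h x := by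
  have hbc_mono : MonotoneOn h (Icc b c) := hh.mono (Icc_subset_Icc_left hab)
  calc (∫ x in a..b, h x) + (c - b) * h b ≤ (∫ x in a..b, h x) + ∫ x in b..c, h x := by
        gcongr
        exact sub_mul_le_integral_of_monotoneOn hbc_mono hbc
    _ = ∫ x in a..c, h x :=
        intervalIntegral.integral_add_adjacent_intervals
          (intervalIntegrable_of_monotoneOn_Icc (hh.mono (Icc_subset_Icc_right hbc)) hab)
          (intervalIntegrable_of_monotoneOn_Icc hbc_mono hbc)

theorem sub_mul_le_integral_of_monotoneOn_of_nonneg (hh : MonotoneOn h (Icc a c))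
    (ha : 0 ≤ h a) (hab : a ≤ b) (hbc : b ≤ c) : (c - b) * h b ≤ ∫ x in a..c, h x := by
  have hnonneg : 0 ≤ ∫ x in a..b, h x :=
    (mul_nonneg (sub_nonneg.2 hab) ha).trans <|
      sub_mul_le_integral_of_monotoneOn (hh.mono (Icc_subset_Icc_right hbc)) hab
  linarith [integral_add_sub_mul_le_of_monotoneOn hh hab hbc]

theorem strictMonoOn_integral_of_monotoneOn (hh : MonotoneOn h (Ici a)) (hab : a ≤ b)
    (hb : 0 < h b) : StrictMonoOn (fun y => ∫ x in a..y, h x) (Ici b) := by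
  intro y hy z _ hyz
  have hay : a ≤ y := hab.trans hy
  have hpos : 0 < (z - y) * h y := mul_pos (sub_pos.2 hyz) (hb.trans_le (hh hab hay hy))
  have hle : (∫ x in a..y, h x) + (z - y) * h y ≤ ∫ x in a..z, h x :=
    integral_add_sub_mul_le_of_monotoneOn (hh.mono Icc_subset_Ici_self) hay hyz.le
  exact (lt_add_of_pos_right _ hpos).trans_le hle

end MonotoneIntegrand

section MulSqrtHalf

variable {h : ℝ → ℝ}

/-- The function `f(ζ) = ζ √(h(ζ/2))` whose generalized inverse at `1/r` is the scale `M(r)`. -/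
noncomputable def mulSqrtHalf (h : ℝ → ℝ) (ζ : ℝ) : ℝ :=
  ζ * √(h (ζ / 2))

theorem continuousOn_mulSqrtHalf (hh : ContinuousOn h (Ici 0)) :
    ContinuousOn (mulSqrtHalf h) (Ici 0) := by
  have hhalf : MapsTo (fun ζ : ℝ => ζ / 2) (Ici 0) (Ici 0) := fun ζ (hζ : 0 ≤ ζ) =>
    div_nonneg hζ zero_le_two
  exact continuousOn_id.mul (hh.comp (by fun_prop) hhalf).sqrt

theorem tendsto_sqrt_half_atTop (hh : Tendsto h atTop atTop) :
    Tendsto (fun ζ => √(h (ζ / 2))) atTop atTop :=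
  Real.tendsto_sqrt_atTop.comp (hh.comp (tendsto_id.atTop_div_const two_pos))

theorem tendsto_mulSqrtHalf_atTop (hh : Tendsto h atTop atTop) :
    Tendsto (mulSqrtHalf h) atTop atTop :=
  tendsto_id.atTop_mul_atTop₀ (tendsto_sqrt_half_atTop hh)

theorem mul_eq_inv_sqrt_half {r m : ℝ} (hr : r ≠ 0) (hm : mulSqrtHalf h m = r⁻¹) :
    r * m = (√(h (m / 2)))⁻¹ := by
  refine eq_inv_of_mul_eq_one_left ?_
  rw [mul_assoc, ← mulSqrtHalf, hm, mul_inv_cancel₀ hr]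

theorem apply_half_pos_of_mulSqrtHalf_pos {m : ℝ} (hm : 0 ≤ m) (hpos : 0 < mulSqrtHalf h m) :
    0 < h (m / 2) :=
  Real.sqrt_pos.1 (pos_of_mul_pos_right hpos hm)

theorem mulSqrtHalf_mul_sqrt_le_integral {m : ℝ} (hh : MonotoneOn h (Icc 0 m)) (h0 : 0 ≤ h 0)
    (hm : 0 ≤ m) : mulSqrtHalf h m * √(h (m / 2)) / 2 ≤ ∫ z in 0..m, h z := by
  have hm' : 0 ≤ m / 2 := div_nonneg hm zero_le_two
  have hhalf : 0 ≤ h (m / 2) := h0.trans (hh ⟨le_rfl, hm⟩ ⟨hm', half_le_self hm⟩ hm')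
  calc mulSqrtHalf h m * √(h (m / 2)) / 2 = (m - m / 2) * (√(h (m / 2)) * √(h (m / 2))) := by
        rw [mulSqrtHalf]; ring
    _ = (m - m / 2) * h (m / 2) := by rw [Real.mul_self_sqrt hhalf]
    _ ≤ ∫ z in 0..m, h z :=
        sub_mul_le_integral_of_monotoneOn_of_nonneg hh h0 hm' (half_le_self hm)

theorem sqrt_half_div_two_le_mul_integral {r m : ℝ} (hh : MonotoneOn h (Icc 0 m))
    (h0 : 0 ≤ h 0) (hr : 0 < r) (hm : 0 ≤ m) (hfm : mulSqrtHalf h m = r⁻¹) :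
    √(h (m / 2)) / 2 ≤ r * ∫ z in 0..m, h z :=
  calc √(h (m / 2)) / 2 = r * (mulSqrtHalf h m * √(h (m / 2)) / 2) := by rw [hfm]; field_simp
    _ ≤ r * ∫ z in 0..m, h z := by
        gcongr
        exact mulSqrtHalf_mul_sqrt_le_integral hh h0 hm

theorem genInv_integral_of_mulSqrtHalf_pos {m : ℝ} (hh : MonotoneOn h (Ici 0)) (hm : 0 ≤ m)
    (hpos : 0 < mulSqrtHalf h m) :
    genInv 0 (fun ζ => ∫ z in 0..ζ, h z) (∫ z in 0..m, h z) = m := by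
  have hm' : 0 ≤ m / 2 := div_nonneg hm zero_le_two
  have hstrict : StrictMonoOn (fun ζ => ∫ z in 0..ζ, h z) (Ici (m / 2)) :=
    strictMonoOn_integral_of_monotoneOn hh hm' (apply_half_pos_of_mulSqrtHalf_pos hm hpos)
  exact genInv_apply_of_strictMonoOn (φ := fun ζ => ∫ z in 0..ζ, h z) hm
    (hstrict.mono (Ici_subset_Ici.2 (half_le_self hm)))

variable {ι : Type*} {l : Filter ι} {r m : ι → ℝ}

theorem tendsto_mul_nhds_zero_of_mulSqrtHalf_eq_inv (h_top : Tendsto h atTop atTop)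
    (hm : Tendsto m l atTop) (hr : ∀ᶠ i in l, 0 < r i)
    (hfm : ∀ᶠ i in l, mulSqrtHalf h (m i) = (r i)⁻¹) :
    Tendsto (fun i => r i * m i) l (nhds 0) := by
  refine ((tendsto_sqrt_half_atTop h_top).comp hm).inv_tendsto_atTop.congr' ?_
  filter_upwards [hr, hfm] with i hri hfi
  exact (mul_eq_inv_sqrt_half hri.ne' hfi).symm

theorem tendsto_mul_integral_atTop_of_mulSqrtHalf_eq_inv (hh : MonotoneOn h (Ici 0))
    (h0 : 0 ≤ h 0) (h_top : Tendsto h atTop atTop) (hm : Tendsto m l atTop)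
    (hr : ∀ᶠ i in l, 0 < r i) (hfm : ∀ᶠ i in l, mulSqrtHalf h (m i) = (r i)⁻¹) :
    Tendsto (fun i => r i * ∫ z in 0..m i, h z) l atTop := by
  refine tendsto_atTop_mono' l ?_
    (((tendsto_sqrt_half_atTop h_top).comp hm).atTop_div_const two_pos)
  filter_upwards [hr, hfm, hm.eventually_ge_atTop 0] with i hri hfi hmi
  exact sqrt_half_div_two_le_mul_integral (hh.mono Icc_subset_Ici_self) h0 hri hmi hfi

end MulSqrtHalf

/-- The construction verifying condition (cond_Rr) in the proof of Lemma 7.5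
(eval_0): with `f(ζ) = ζ √(h(ζ/2))`, `M(r) = f⁻¹(1/r)` and
`R(r) = γ̃ r g(M(r))`, one has `R(r) → ∞` and `r g⁻¹(R(r)/(γ̃ r)) → 0` as
`r ↓ 0`. -/
theorem cond_Rr_construction
    (h : ℝ → ℝ)
    (h_nonneg : ∀ ζ, 0 ≤ ζ → 0 ≤ h ζ)
    (h_mono : MonotoneOn h (Set.Ici 0))
    (h_cont : ContinuousOn h (Set.Ici 0))
    (h_top : Tendsto h atTop atTop)
    (g : ℝ → ℝ) (hg : ∀ ζ, g ζ = ∫ z in (0:ℝ)..ζ, h z)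
    (gInv : ℝ → ℝ) (hgInv : ∀ y, gInv y = sSup {ζ : ℝ | 0 ≤ ζ ∧ g ζ = y})
    (γt : ℝ) (hγt : 0 < γt)
    (f : ℝ → ℝ) (hf : ∀ ζ, f ζ = ζ * Real.sqrt (h (ζ / 2)))
    (fInv : ℝ → ℝ) (hfInv : ∀ y, fInv y = sSup {ζ : ℝ | 0 ≤ ζ ∧ f ζ = y})
    (M : ℝ → ℝ) (hM : ∀ r, M r = fInv (1 / r))
    (R : ℝ → ℝ) (hR : ∀ r, R r = γt * r * g (M r)) :
    Tendsto R (nhdsWithin 0 (Set.Ioi 0)) atTop ∧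
    Tendsto (fun r => r * gInv (R r / (γt * r))) (nhdsWithin 0 (Set.Ioi 0)) (nhds 0) := by
  obtain rfl : f = mulSqrtHalf h := funext hf
  obtain rfl : g = fun ζ => ∫ z in 0..ζ, h z := funext hg
  obtain rfl : gInv = genInv 0 _ := funext hgInv
  obtain rfl : fInv = genInv 0 _ := funext hfInv
  have hf_cont := continuousOn_mulSqrtHalf h_cont
  have hf_top := tendsto_mulSqrtHalf_atTop h_top
  have hr_pos : ∀ᶠ r : ℝ in nhdsWithin 0 (Ioi 0), 0 < r := self_mem_nhdsWithin
  have hM_top : Tendsto M (nhdsWithin 0 (Ioi 0)) atTop := by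
    simpa only [funext hM, one_div] using!
      (tendsto_genInv_atTop hf_cont hf_top).comp tendsto_inv_nhdsGT_zero
  have hfM : ∀ᶠ r in nhdsWithin 0 (Ioi 0), mulSqrtHalf h (M r) = r⁻¹ := by
    filter_upwards [hr_pos] with r hr
    rw [hM, one_div]
    exact apply_genInv hf_cont hf_top (by simp [mulSqrtHalf, hr.le])
  constructor
  · simpa only [funext hR, mul_assoc] using
      (tendsto_mul_integral_atTop_of_mulSqrtHalf_eq_inv h_mono (h_nonneg 0 le_rfl) h_top hM_top
        hr_pos hfM).const_mul_atTop hγt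
  · refine (tendsto_mul_nhds_zero_of_mulSqrtHalf_eq_inv h_top hM_top hr_pos hfM).congr' ?_
    filter_upwards [hr_pos, hfM, hM_top.eventually_ge_atTop 0] with r hr hfr hMr
    rw [hR, mul_div_cancel_left₀ _ (mul_pos hγt hr).ne',
      genInv_integral_of_mulSqrtHalf_pos h_mono hMr (hfr ▸ inv_pos.2 hr)]
end

section
/- Let γ > 0 and let L : [0,1] → [0,∞) be a non-decreasing function satisfying L(v) ≥ γ v for all v ∈ [0,1] and lim_{δ↓0} L(δ)/δ = γ. Fix t ∈ (0,1] and for δ ∈ (0,t) define ũ(δ) := sup{v ∈ [0,t] : L(v) ≤ γ δ}. Then ũ(δ)/δ → 1 and L(ũ(δ))/δ → γ as δ ↓ 0. -/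
open Set Filter

/-!
The lower bound `γ v ≤ L v` confines `{v ∈ [0,t] : L v ≤ y}` to `[0, y/γ]`. Conversely, if `c < 1/γ`
then `L (c y) / y → γ c < 1`, so `c y` belongs to that set for small `y`. The supremum is therefore
asymptotic to `y/γ`; substituting it into `L x / x → γ` gives the second limit.
-/

open scoped Topology

theorem tendsto_const_mul_div_self_nhdsGT_zero {𝕜 : Type*} [GroupWithZero 𝕜] [Preorder 𝕜]
    [TopologicalSpace 𝕜] (c : 𝕜) : Tendsto (fun x => c * x / x) (𝓝[>] 0) (𝓝 c) :=
  tendsto_const_nhds.congr' <| eventually_mem_nhdsWithin.mono fun _ hx =>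
    (mul_div_cancel_right₀ c (ne_of_gt hx)).symm

section LinearOrderedField

variable {ι 𝕜 : Type*} [Field 𝕜] [LinearOrder 𝕜] [IsStrictOrderedRing 𝕜] [TopologicalSpace 𝕜]
  [OrderTopology 𝕜] {l : Filter ι} {f : 𝕜 → 𝕜} {g u : ι → 𝕜} {a c : 𝕜}

theorem tendsto_nhdsGT_zero_of_tendsto_div (hg : Tendsto g l (𝓝[>] 0)) (hc : 0 < c)
    (hu : Tendsto (fun i => u i / g i) l (𝓝 c)) : Tendsto u l (𝓝[>] 0) := by
  obtain ⟨hg_zero, hg_pos⟩ := tendsto_nhdsWithin_iff.1 hg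
  refine tendsto_nhdsWithin_iff.2 ⟨?_, ?_⟩
  · have hprod : Tendsto (fun i => u i / g i * g i) l (𝓝 0) := by
      simpa only [mul_zero] using hu.mul hg_zero
    exact hprod.congr' (hg_pos.mono fun i hi => div_mul_cancel₀ _ (ne_of_gt hi))
  · filter_upwards [hg_pos, hu.eventually_const_lt hc] with i hgi hui
    exact (div_pos_iff_of_pos_right hgi).1 hui

theorem tendsto_comp_div_of_tendsto_div (hf : Tendsto (fun x => f x / x) (𝓝[>] 0) (𝓝 a))
    (hg : Tendsto g l (𝓝[>] 0)) (hc : 0 < c) (hu : Tendsto (fun i => u i / g i) l (𝓝 c)) :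
    Tendsto (fun i => f (u i) / g i) l (𝓝 (a * c)) := by
  have hu_zero := tendsto_nhdsGT_zero_of_tendsto_div hg hc hu
  have hu_pos : ∀ᶠ i in l, 0 < u i := hu_zero.eventually self_mem_nhdsWithin
  exact ((hf.comp hu_zero).mul hu).congr' (hu_pos.mono fun i hi => div_mul_div_cancel₀ hi.ne')

end LinearOrderedField

/-- The right generalized inverse `y ↦ sup {v ∈ [0,t] : L v ≤ y}` of `L` restricted to `[0,t]`, so
that `ũ(δ) = sublevelSup L t (γ δ)`. It takes the value `0` where the set is empty. -/
noncomputable def sublevelSup (L : ℝ → ℝ) (t y : ℝ) : ℝ :=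
  sSup {v | v ∈ Icc 0 t ∧ L v ≤ y}

section SublevelSup

variable {L : ℝ → ℝ} {γ t v y : ℝ}

theorem le_sublevelSup (hv : v ∈ Icc 0 t) (hLv : L v ≤ y) : v ≤ sublevelSup L t y :=
  le_csSup ⟨t, fun _ hw => hw.1.2⟩ ⟨hv, hLv⟩

theorem sublevelSup_le_div (hγ : 0 < γ) (hL_ge : ∀ v ∈ Icc 0 t, γ * v ≤ L v) (hy : 0 ≤ y) :
    sublevelSup L t y ≤ y / γ :=
  Real.sSup_le (fun v hv => (le_div_iff₀' hγ).2 ((hL_ge v hv.1).trans hv.2))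
    (div_nonneg hy hγ.le)

theorem eventually_mul_le_sublevelSup {c : ℝ} (ht : 0 < t)
    (hL_lim : Tendsto (fun x => L x / x) (𝓝[>] 0) (𝓝 γ)) (hc : 0 < c) (hγc : γ * c < 1) :
    ∀ᶠ y in 𝓝[>] 0, c * y ≤ sublevelSup L t y := by
  have hmul := tendsto_const_mul_div_self_nhdsGT_zero c
  have hmem : ∀ᶠ y in 𝓝[>] 0, c * y ∈ Ioo 0 t :=
    tendsto_nhdsGT_zero_of_tendsto_div tendsto_id hc hmul (Ioo_mem_nhdsGT ht)
  have hlt : ∀ᶠ y in 𝓝[>] 0, L (c * y) / y < 1 :=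
    (tendsto_comp_div_of_tendsto_div hL_lim tendsto_id hc hmul).eventually_lt_const hγc
  filter_upwards [hmem, hlt, self_mem_nhdsWithin] with y hcy hLy hy
  exact le_sublevelSup (Ioo_subset_Icc_self hcy) ((div_lt_one hy).1 hLy).le

theorem tendsto_sublevelSup_div (hγ : 0 < γ) (ht : 0 < t)
    (hL_ge : ∀ v ∈ Icc 0 t, γ * v ≤ L v)
    (hL_lim : Tendsto (fun x => L x / x) (𝓝[>] 0) (𝓝 γ)) :
    Tendsto (fun y => sublevelSup L t y / y) (𝓝[>] 0) (𝓝 γ⁻¹) := by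
  refine tendsto_order.2 ⟨fun a ha => ?_, fun a ha => ?_⟩
  · obtain ⟨c, hac, hcγ⟩ := exists_between (max_lt ha (inv_pos.2 hγ))
    obtain ⟨hac, hc⟩ := max_lt_iff.1 hac
    have hγc : γ * c < 1 := (lt_inv_mul_iff₀ hγ).1 (by rwa [mul_one])
    filter_upwards [eventually_mul_le_sublevelSup ht hL_lim hc hγc, self_mem_nhdsWithin]
      with y hle hy
    exact hac.trans_le ((le_div_iff₀ hy).2 hle)
  · filter_upwards [self_mem_nhdsWithin] with y (hy : 0 < y)
    have hle : sublevelSup L t y / y ≤ γ⁻¹ :=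
      (div_le_iff₀ hy).2 ((sublevelSup_le_div hγ hL_ge hy.le).trans_eq (div_eq_inv_mul y γ))
    exact hle.trans_lt ha

theorem tilde_u_convergence_general (hγ : 0 < γ) (ht : 0 < t)
    (hL_ge : ∀ v ∈ Icc 0 t, γ * v ≤ L v)
    (hL_lim : Tendsto (fun x => L x / x) (𝓝[>] 0) (𝓝 γ)) :
    Tendsto (fun δ => sublevelSup L t (γ * δ) / δ) (𝓝[>] 0) (𝓝 1) ∧
      Tendsto (fun δ => L (sublevelSup L t (γ * δ)) / δ) (𝓝[>] 0) (𝓝 γ) := by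
  have hratio : Tendsto (fun δ => sublevelSup L t (γ * δ) / δ) (𝓝[>] 0) (𝓝 1) := by
    simpa only [id_eq, inv_mul_cancel₀ hγ.ne'] using
      tendsto_comp_div_of_tendsto_div (tendsto_sublevelSup_div hγ ht hL_ge hL_lim) tendsto_id hγ
        (tendsto_const_mul_div_self_nhdsGT_zero γ)
  refine ⟨hratio, ?_⟩
  simpa only [id_eq, mul_one] using
    tendsto_comp_div_of_tendsto_div hL_lim tendsto_id one_pos hratio

end SublevelSup

/-- Pathwise content of Lemma 7.10 (temp_tilde_u) and (conv_Lu): if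
`L : [0,1] → [0,∞)` is non-decreasing with `L(v) ≥ γ v` and
`L(δ)/δ → γ` as `δ ↓ 0`, and `ũ(δ) = sup {v ∈ [0,t] : L(v) ≤ γ δ}` for a
fixed `t ∈ (0,1]`, then `ũ(δ)/δ → 1` and `L(ũ(δ))/δ → γ` as `δ ↓ 0`. -/
theorem tilde_u_convergence
    (γ : ℝ) (hγ : 0 < γ)
    (L : ℝ → ℝ)
    (hL_nonneg : ∀ v ∈ Set.Icc (0:ℝ) 1, 0 ≤ L v)
    (hL_mono : MonotoneOn L (Set.Icc 0 1))
    (hL_ge : ∀ v ∈ Set.Icc (0:ℝ) 1, γ * v ≤ L v)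
    (hL_lim : Tendsto (fun δ => L δ / δ) (nhdsWithin 0 (Set.Ioi 0)) (nhds γ))
    (t : ℝ) (ht : t ∈ Set.Ioc (0:ℝ) 1)
    (uu : ℝ → ℝ)
    (huu : ∀ δ, uu δ = sSup {v | v ∈ Set.Icc 0 t ∧ L v ≤ γ * δ}) :
    Tendsto (fun δ => uu δ / δ) (nhdsWithin 0 (Set.Ioi 0)) (nhds 1) ∧
    Tendsto (fun δ => L (uu δ) / δ) (nhdsWithin 0 (Set.Ioi 0)) (nhds γ) := by
  obtain rfl : uu = fun δ => sublevelSup L t (γ * δ) := funext huu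
  exact tilde_u_convergence_general hγ ht.1 (fun v hv => hL_ge v ⟨hv.1, hv.2.trans ht.2⟩) hL_lim
end

section
/- Let α₀, α₁, β₁ > 0 and let γ ≥ α₁ β₁ / 8 (condition [D] of the paper). Then the function ĝ(ζ) = γ α₀ ζ² + α₁ log(α₀ β₁ ζ² + 1) is convex on ℝ (in particular on [0,∞)). -/
/-!
Rescaling by `t = √(α₀ β₁) ζ` turns the logarithmic term into `log (t ^ 2 + 1)`, whose second
derivative `2 (1 - t ^ 2) / (t ^ 2 + 1) ^ 2` attains its minimum `-1 / 4` at `t ^ 2 = 3`. Adding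
`t ^ 2 / 8` therefore makes it convex, and condition [D] says exactly that the quadratic term
of `ĝ` contains `α₁` copies of this correction; what is left of it is a nonnegative multiple
of `ζ ^ 2`.
-/

open Real Set

theorem hasDerivAt_log_sq_add_one (t : ℝ) :
    HasDerivAt (fun x : ℝ => log (x ^ 2 + 1)) (2 * t / (t ^ 2 + 1)) t := by
  have hpos : 0 < t ^ 2 + 1 := by positivity
  simpa using ((hasDerivAt_pow 2 t).add_const 1).log hpos.ne'

theorem hasDerivAt_two_mul_div_sq_add_one (t : ℝ) :
    HasDerivAt (fun x : ℝ => 2 * x / (x ^ 2 + 1)) (2 * (1 - t ^ 2) / (t ^ 2 + 1) ^ 2) t := by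
  have hpos : 0 < t ^ 2 + 1 := by positivity
  have hnum : HasDerivAt (fun x : ℝ => 2 * x) 2 t := by
    simpa using (hasDerivAt_id t).const_mul 2
  have hden : HasDerivAt (fun x : ℝ => x ^ 2 + 1) (2 * t) t := by
    simpa using (hasDerivAt_pow 2 t).add_const 1
  exact (hnum.fun_div hden hpos.ne').congr_deriv (by ring)

theorem one_fourth_add_two_mul_one_sub_sq_div_nonneg (t : ℝ) :
    0 ≤ 1 / 4 + 2 * (1 - t ^ 2) / (t ^ 2 + 1) ^ 2 := by
  have hsquare : 1 / 4 + 2 * (1 - t ^ 2) / (t ^ 2 + 1) ^ 2 =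
      (t ^ 2 - 3) ^ 2 / (4 * (t ^ 2 + 1) ^ 2) := by
    field_simp
    ring
  rw [hsquare]
  positivity

theorem convexOn_sq_div_eight_add_log_sq_add_one :
    ConvexOn ℝ univ (fun t : ℝ => t ^ 2 / 8 + log (t ^ 2 + 1)) := by
  have hderiv (t : ℝ) : HasDerivAt (fun x : ℝ => x ^ 2 / 8 + log (x ^ 2 + 1))
      (t / 4 + 2 * t / (t ^ 2 + 1)) t := by
    have hsq : HasDerivAt (fun x : ℝ => x ^ 2 / 8) (t / 4) t :=
      ((hasDerivAt_pow 2 t).div_const 8).congr_deriv (by norm_num; ring)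
    exact hsq.add (hasDerivAt_log_sq_add_one t)
  have hderiv₂ (t : ℝ) : HasDerivAt (fun x : ℝ => x / 4 + 2 * x / (x ^ 2 + 1))
      (1 / 4 + 2 * (1 - t ^ 2) / (t ^ 2 + 1) ^ 2) t :=
    ((hasDerivAt_id t).div_const 4).add (hasDerivAt_two_mul_div_sq_add_one t)
  exact convexOn_of_hasDerivWithinAt2_nonneg convex_univ
    (fun t _ => (hderiv t).continuousAt.continuousWithinAt)
    (fun t _ => (hderiv t).hasDerivWithinAt)
    (fun t _ => (hderiv₂ t).hasDerivWithinAt)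
    (fun t _ => one_fourth_add_two_mul_one_sub_sq_div_nonneg t)

theorem convexOn_mul_sq_div_eight_add_log_mul_sq_add_one {a : ℝ} (ha : 0 ≤ a) :
    ConvexOn ℝ univ (fun x : ℝ => a * x ^ 2 / 8 + log (a * x ^ 2 + 1)) := by
  have hscaled := convexOn_sq_div_eight_add_log_sq_add_one.comp_linearMap
    (LinearMap.mulLeft ℝ (√a))
  simpa only [preimage_univ, Function.comp_def, LinearMap.mulLeft_apply, mul_pow, sq_sqrt ha]
    using hscaled

/-- Under condition [D] of the paper, `γ ≥ α₁ β₁ / 8`, the effective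
market-impact cost function `ĝ(ζ) = γ α₀ ζ² + α₁ log(α₀ β₁ ζ² + 1)` is convex
on ℝ (in particular on `[0,∞)`). -/
theorem ghat_convex
    (α₀ α₁ β₁ γ : ℝ) (hα₀ : 0 < α₀) (hα₁ : 0 < α₁) (hβ₁ : 0 < β₁)
    (hγ : α₁ * β₁ / 8 ≤ γ) :
    ConvexOn ℝ Set.univ
      (fun ζ : ℝ => γ * α₀ * ζ ^ 2 + α₁ * Real.log (α₀ * β₁ * ζ ^ 2 + 1)) := by
  have hcorrected : ConvexOn ℝ univ
      (fun ζ : ℝ => α₀ * β₁ * ζ ^ 2 / 8 + log (α₀ * β₁ * ζ ^ 2 + 1)) :=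
    convexOn_mul_sq_div_eight_add_log_mul_sq_add_one (by positivity)
  have hexcess : 0 ≤ (γ - α₁ * β₁ / 8) * α₀ := mul_nonneg (sub_nonneg.2 hγ) hα₀.le
  refine ((even_two.convexOn_pow.smul hexcess).add (hcorrected.smul hα₁.le)).congr fun ζ _ => ?_
  simp only [Pi.add_apply, smul_eq_mul]
  ring
end

section
/- Fix Φ₀ > 0, let D = ℝ × [0,Φ₀] × [0,∞), let u ∈ 𝒞, and let c ≥ 0 be a constant. Define Ju : D → [0,∞) by Ju(w,φ,s) = sup_{ψ∈[0,φ]} u(w + ((1 − e^{−cψ})/c) s, φ − ψ, s e^{−cψ}) when c > 0, and Ju(w,φ,s) = sup_{ψ∈[0,φ]} u(w + ψ s, φ − ψ, s) when c = 0. Then: (a) Ju(w,φ,s) ≥ u(w,φ,s) for all (w,φ,s) ∈ D; (b) Ju is continuous on D; (c) Ju is non-decreasing in each of the three variables; and (d) Ju satisfies a polynomial growth bound: there exist constants C′, m′ > 0 with Ju(w,φ,s) ≤ C′(1 + |w|^{m′} + s^{m′}) on D. In particular Ju ∈ 𝒞. -/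
open Set Real

/-- The operator `J` of Theorem 2.1(ii) (with `c = γ h(∞)`): the utility of
liquidating `ψ ∈ [0,φ]` shares by an infinitely divided block trade in
infinitesimal time. -/
noncomputable def Ju (c : ℝ) (u : ℝ → ℝ → ℝ → ℝ) (w φ s : ℝ) : ℝ :=
  if c = 0 then
    sSup ((fun ψ => u (w + ψ * s) (φ - ψ) s) '' Set.Icc 0 φ)
  else
    sSup ((fun ψ =>
      u (w + ((1 - Real.exp (-(c * ψ))) / c) * s) (φ - ψ) (s * Real.exp (-(c * ψ)))) ''
        Set.Icc 0 φ)

/-! The sale of `ψ ∈ [0, φ]` moves the state `(w, φ, s)` monotonically and continuously, and every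
state so reached lies below `(w + A s, φ, s B)`, where `A` and `B` bound the proceeds and the price
factor. Taking the supremum over `ψ` therefore preserves monotonicity and polynomial growth. The
interval `[0, φ]` varies with the state, but writing `ψ = t φ` with `t ∈ [0, 1]` turns it into a
fixed compact set, over which a supremum preserves continuity. -/

theorem continuousOn_sSup_image_Icc {X α : Type*} [TopologicalSpace X]
    [ConditionallyCompleteLinearOrder α] [TopologicalSpace α] [OrderTopology α]
    {D : Set X} {l r : X → ℝ} {f : X → ℝ → α}
    (hl : ContinuousOn l D) (hr : ContinuousOn r D) (hlr : ∀ x ∈ D, l x ≤ r x)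
    (hf : ContinuousOn ↿f {q : X × ℝ | q.1 ∈ D ∧ q.2 ∈ Icc (l q.1) (r q.1)}) :
    ContinuousOn (fun x => sSup (f x '' Icc (l x) (r x))) D := by
  have Icc_eq : ∀ x ∈ D, Icc (l x) (r x) = AffineMap.lineMap (l x) (r x) '' Icc (0 : ℝ) 1 :=
    fun x hx => by rw [← segment_eq_Icc (hlr x hx), segment_eq_image_lineMap]
  rw [continuousOn_iff_continuous_domRestrict] at hl hr ⊢
  let g : D → unitInterval → α := fun x t => f x (AffineMap.lineMap (l x) (r x) (t : ℝ))
  have hg : Continuous ↿g := by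
    have hl' : Continuous fun q : D × unitInterval => l q.1 := hl.comp continuous_fst
    have hr' : Continuous fun q : D × unitInterval => r q.1 := hr.comp continuous_fst
    have reparam : Continuous fun q : D × unitInterval =>
        ((q.1 : X), AffineMap.lineMap (l q.1) (r q.1) (q.2 : ℝ)) := by
      simp only [AffineMap.lineMap_apply_ring']
      exact (continuous_subtype_val.comp continuous_fst).prodMk
        (((continuous_subtype_val.comp continuous_snd).mul (hr'.sub hl')).add hl')
    refine hf.comp_continuous reparam fun q => ⟨q.1.2, ?_⟩
    rw [Icc_eq q.1 q.1.2]
    exact mem_image_of_mem _ q.2.2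
  refine (isCompact_univ.continuous_sSup hg).congr fun x => ?_
  rw [domRestrict_apply, Icc_eq x x.2, image_image, image_univ, image_eq_range]

theorem add_rpow_le_two_rpow_mul {x y p : ℝ} (hx : 0 ≤ x) (hy : 0 ≤ y) (hp : 0 ≤ p) :
    (x + y) ^ p ≤ 2 ^ p * (x ^ p + y ^ p) := by
  lift x to NNReal using hx
  lift y to NNReal using hy
  have h := ENNReal.add_rpow_le_two_rpow_mul_rpow_add_rpow (x : ENNReal) y hp
  have coe_two : (2 : ENNReal) = ((2 : NNReal) : ENNReal) := rfl
  rw [coe_two] at h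
  simp only [← ENNReal.coe_add, ← ENNReal.coe_mul, ← ENNReal.coe_rpow_of_nonneg _ hp] at h
  exact_mod_cast h

theorem one_add_abs_add_rpow_add_mul_rpow_le {A B s m : ℝ} (hA : 0 ≤ A) (hB : 0 ≤ B)
    (hs : 0 ≤ s) (hm : 0 ≤ m) (w : ℝ) :
    1 + |w + A * s| ^ m + (s * B) ^ m ≤
      (1 + 2 ^ m * (1 + A ^ m) + B ^ m) * (1 + |w| ^ m + s ^ m) := by
  have cash : |w + A * s| ^ m ≤ 2 ^ m * (|w| ^ m + A ^ m * s ^ m) :=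
    calc |w + A * s| ^ m ≤ (|w| + A * s) ^ m := by
          gcongr
          exact (abs_add_le _ _).trans_eq (by rw [abs_of_nonneg (mul_nonneg hA hs)])
      _ ≤ 2 ^ m * (|w| ^ m + (A * s) ^ m) :=
          add_rpow_le_two_rpow_mul (abs_nonneg w) (mul_nonneg hA hs) hm
      _ = 2 ^ m * (|w| ^ m + A ^ m * s ^ m) := by rw [mul_rpow hA hs]
  have cross_terms : 0 ≤ |w| ^ m + s ^ m + 2 ^ m * (1 + A ^ m + s ^ m + A ^ m * |w| ^ m) +
      B ^ m * (1 + |w| ^ m) := by positivity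
  rw [mul_rpow hs hB]
  linarith

/-- The domain `D = ℝ × [0,Φ₀] × [0,∞)` of states (cash, shares held, share price). -/
def stateSpace (Φ₀ : ℝ) : Set (ℝ × ℝ × ℝ) :=
  {p | p.2.1 ∈ Icc 0 Φ₀ ∧ 0 ≤ p.2.2}

theorem mem_Icc_of_mem_stateSpace {Φ₀ ψ : ℝ} {p : ℝ × ℝ × ℝ} (hp : p ∈ stateSpace Φ₀)
    (hψ : ψ ∈ Icc 0 p.2.1) : ψ ∈ Icc 0 Φ₀ :=
  Icc_subset_Icc_right hp.1.2 hψ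

theorem memC_iff {Φ₀ C m : ℝ} {u : ℝ → ℝ → ℝ → ℝ} :
    MemC Φ₀ u C m ↔
      (∀ p ∈ stateSpace Φ₀, 0 ≤ ↿u p) ∧ ContinuousOn ↿u (stateSpace Φ₀) ∧
        MonotoneOn ↿u (stateSpace Φ₀) ∧
        ∀ p ∈ stateSpace Φ₀, ↿u p ≤ C * (1 + |p.1| ^ m + p.2.2 ^ m) := by
  constructor
  · intro hu
    refine ⟨fun p hp => hu.nonneg _ _ _ hp.1 hp.2, hu.continuousOn, ?_,
      fun p hp => hu.growth _ _ _ hp.1 hp.2⟩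
    rintro ⟨w₁, φ₁, s₁⟩ ⟨hφ₁, hs₁⟩ ⟨w₂, φ₂, s₂⟩ ⟨hφ₂, _⟩ ⟨hw, hφ, hs⟩
    calc u w₁ φ₁ s₁ ≤ u w₂ φ₁ s₁ := hu.mono_w _ _ _ _ hw hφ₁ hs₁
      _ ≤ u w₂ φ₂ s₁ := hu.mono_phi _ _ _ _ hφ hφ₁ hφ₂ hs₁
      _ ≤ u w₂ φ₂ s₂ := hu.mono_s _ _ _ _ hs hφ₂ hs₁
  · rintro ⟨nonneg, cont, mono, growth⟩
    have joint_mono {w₁ w₂ φ₁ φ₂ s₁ s₂ : ℝ} (hφ₁ : φ₁ ∈ Icc 0 Φ₀) (hφ₂ : φ₂ ∈ Icc 0 Φ₀)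
        (hs₁ : 0 ≤ s₁) (hw : w₁ ≤ w₂) (hφ : φ₁ ≤ φ₂) (hs : s₁ ≤ s₂) : u w₁ φ₁ s₁ ≤ u w₂ φ₂ s₂ :=
      mono (a := (w₁, φ₁, s₁)) ⟨hφ₁, hs₁⟩ (b := (w₂, φ₂, s₂)) ⟨hφ₂, hs₁.trans hs⟩ ⟨hw, hφ, hs⟩
    exact
      { nonneg := fun w φ s hφ hs => nonneg (w, φ, s) ⟨hφ, hs⟩
        continuousOn := cont
        mono_w := fun _ _ _ _ hw hφ hs => joint_mono hφ hφ hs hw le_rfl le_rfl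
        mono_phi := fun _ _ _ _ hφ hφ₁ hφ₂ hs => joint_mono hφ₁ hφ₂ hs le_rfl hφ le_rfl
        mono_s := fun _ _ _ _ hs hφ hs₁ => joint_mono hφ hφ hs₁ le_rfl le_rfl hs
        growth := fun w φ s hφ hs => growth (w, φ, s) ⟨hφ, hs⟩ }

/-- The state reached from `p = (w, φ, s)` by selling `ψ` shares when the sale brings in `a ψ` per
unit of the initial price and multiplies the price by `b ψ`. -/
def afterSale (a b : ℝ → ℝ) (p : ℝ × ℝ × ℝ) (ψ : ℝ) : ℝ × ℝ × ℝ :=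
  (p.1 + a ψ * p.2.2, p.2.1 - ψ, p.2.2 * b ψ)

/-- The best value of `v` attainable by one sale out of the current holdings; it is `Ju` for the
proceeds `a` and the price factor `b` given in `Ju_eq_saleValue`. -/
noncomputable def saleValue (a b : ℝ → ℝ) (v : ℝ × ℝ × ℝ → ℝ) (p : ℝ × ℝ × ℝ) : ℝ :=
  sSup ((fun ψ => v (afterSale a b p ψ)) '' Icc 0 p.2.1)

theorem saleValue_le {a b : ℝ → ℝ} {v : ℝ × ℝ × ℝ → ℝ} {p : ℝ × ℝ × ℝ} {M : ℝ}
    (hp : 0 ≤ p.2.1) (h : ∀ ψ ∈ Icc 0 p.2.1, v (afterSale a b p ψ) ≤ M) :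
    saleValue a b v p ≤ M :=
  csSup_le ((nonempty_Icc.2 hp).image _) (forall_mem_image.2 h)

/-- A price impact on sales of up to `Φ₀` shares, encoded as for `afterSale`: selling `ψ` shares
brings in `a ψ` per unit of the initial price and multiplies the price by `b ψ`. -/
structure PriceImpact (Φ₀ : ℝ) (a b : ℝ → ℝ) : Prop where
  continuousOn_proceeds : ContinuousOn a (Icc 0 Φ₀)
  continuousOn_price : ContinuousOn b (Icc 0 Φ₀)
  proceeds_nonneg : ∀ ψ ∈ Icc 0 Φ₀, 0 ≤ a ψ
  price_nonneg : ∀ ψ ∈ Icc 0 Φ₀, 0 ≤ b ψ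
  proceeds_zero : a 0 = 0
  price_zero : b 0 = 1

namespace PriceImpact

variable {Φ₀ : ℝ} {a b : ℝ → ℝ} {v : ℝ × ℝ × ℝ → ℝ} {p q : ℝ × ℝ × ℝ} {ψ : ℝ}

theorem of_continuous (hb : Continuous b) (hb_nonneg : ∀ x ∈ Icc 0 Φ₀, 0 ≤ b x)
    (hb_zero : b 0 = 1) : PriceImpact Φ₀ (fun ψ => ∫ x in (0 : ℝ)..ψ, b x) b where
  continuousOn_proceeds :=
    (intervalIntegral.continuous_primitive (fun _ _ => hb.intervalIntegrable _ _) 0).continuousOn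
  continuousOn_price := hb.continuousOn
  proceeds_nonneg _ hψ := intervalIntegral.integral_nonneg hψ.1 fun x hx =>
    hb_nonneg x ⟨hx.1, hx.2.trans hψ.2⟩
  price_nonneg := hb_nonneg
  proceeds_zero := intervalIntegral.integral_same
  price_zero := hb_zero

theorem afterSale_zero (h : PriceImpact Φ₀ a b) (p : ℝ × ℝ × ℝ) : afterSale a b p 0 = p := by
  simp [afterSale, h.proceeds_zero, h.price_zero]

theorem afterSale_mem (h : PriceImpact Φ₀ a b) (hp : p ∈ stateSpace Φ₀) (hψ : ψ ∈ Icc 0 p.2.1) :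
    afterSale a b p ψ ∈ stateSpace Φ₀ :=
  ⟨⟨sub_nonneg.2 hψ.2, (sub_le_self _ hψ.1).trans hp.1.2⟩,
    mul_nonneg hp.2 (h.price_nonneg ψ (mem_Icc_of_mem_stateSpace hp hψ))⟩

theorem afterSale_le_afterSale (h : PriceImpact Φ₀ a b) (hψ : ψ ∈ Icc 0 Φ₀) (hpq : p ≤ q) :
    afterSale a b p ψ ≤ afterSale a b q ψ :=
  ⟨add_le_add hpq.1 (mul_le_mul_of_nonneg_left hpq.2.2 (h.proceeds_nonneg ψ hψ)),
    sub_le_sub_right hpq.2.1 ψ, mul_le_mul_of_nonneg_right hpq.2.2 (h.price_nonneg ψ hψ)⟩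

theorem exists_afterSale_le (h : PriceImpact Φ₀ a b) :
    ∃ A B : ℝ, 0 ≤ A ∧ 0 ≤ B ∧ ∀ p ∈ stateSpace Φ₀, ∀ ψ ∈ Icc 0 p.2.1,
      afterSale a b p ψ ≤ (p.1 + A * p.2.2, p.2.1, p.2.2 * B) := by
  obtain ⟨A, hA⟩ := isCompact_Icc.bddAbove_image h.continuousOn_proceeds
  obtain ⟨B, hB⟩ := isCompact_Icc.bddAbove_image h.continuousOn_price
  refine ⟨max A 0, max B 0, le_max_right _ _, le_max_right _ _, fun p hp ψ hψ => ?_⟩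
  have hψ₀ := mem_Icc_of_mem_stateSpace hp hψ
  have ha : a ψ ≤ max A 0 := le_max_of_le_left (hA (mem_image_of_mem a hψ₀))
  have hb : b ψ ≤ max B 0 := le_max_of_le_left (hB (mem_image_of_mem b hψ₀))
  exact ⟨add_le_add_right (mul_le_mul_of_nonneg_right ha hp.2) _, sub_le_self _ hψ.1,
    mul_le_mul_of_nonneg_left hb hp.2⟩

theorem exists_apply_afterSale_le (h : PriceImpact Φ₀ a b) (hv : MonotoneOn v (stateSpace Φ₀)) :
    ∃ A B : ℝ, 0 ≤ A ∧ 0 ≤ B ∧ ∀ p ∈ stateSpace Φ₀, ∀ ψ ∈ Icc 0 p.2.1,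
      v (afterSale a b p ψ) ≤ v (p.1 + A * p.2.2, p.2.1, p.2.2 * B) := by
  obtain ⟨A, B, hA, hB, hAB⟩ := h.exists_afterSale_le
  exact ⟨A, B, hA, hB, fun p hp ψ hψ =>
    hv (h.afterSale_mem hp hψ) ⟨hp.1, mul_nonneg hp.2 hB⟩ (hAB p hp ψ hψ)⟩

theorem le_saleValue (h : PriceImpact Φ₀ a b) (hv : MonotoneOn v (stateSpace Φ₀))
    (hp : p ∈ stateSpace Φ₀) (hψ : ψ ∈ Icc 0 p.2.1) :
    v (afterSale a b p ψ) ≤ saleValue a b v p := by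
  obtain ⟨A, B, -, -, hAB⟩ := h.exists_apply_afterSale_le hv
  exact le_csSup ⟨_, forall_mem_image.2 (hAB p hp)⟩ (mem_image_of_mem _ hψ)

theorem self_le_saleValue (h : PriceImpact Φ₀ a b) (hv : MonotoneOn v (stateSpace Φ₀))
    (hp : p ∈ stateSpace Φ₀) : v p ≤ saleValue a b v p := by
  simpa only [h.afterSale_zero] using h.le_saleValue hv hp (left_mem_Icc.2 hp.1.1)

theorem monotoneOn_saleValue (h : PriceImpact Φ₀ a b) (hv : MonotoneOn v (stateSpace Φ₀)) :
    MonotoneOn (saleValue a b v) (stateSpace Φ₀) := by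
  refine fun p hp q hq hpq => saleValue_le hp.1.1 fun ψ hψ => ?_
  have hψq : ψ ∈ Icc 0 q.2.1 := ⟨hψ.1, hψ.2.trans hpq.2.1⟩
  calc v (afterSale a b p ψ) ≤ v (afterSale a b q ψ) :=
        hv (h.afterSale_mem hp hψ) (h.afterSale_mem hq hψq)
          (h.afterSale_le_afterSale (mem_Icc_of_mem_stateSpace hp hψ) hpq)
    _ ≤ saleValue a b v q := h.le_saleValue hv hq hψq

theorem continuousOn_saleValue (h : PriceImpact Φ₀ a b) (hv : ContinuousOn v (stateSpace Φ₀)) :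
    ContinuousOn (saleValue a b v) (stateSpace Φ₀) := by
  refine continuousOn_sSup_image_Icc (f := fun p ψ => v (afterSale a b p ψ)) continuousOn_const
    (by fun_prop) (fun p hp => hp.1.1) ?_
  let S : Set ((ℝ × ℝ × ℝ) × ℝ) := {x | x.1 ∈ stateSpace Φ₀ ∧ x.2 ∈ Icc 0 x.1.2.1}
  have sold_mem : MapsTo Prod.snd S (Icc 0 Φ₀) := fun x hx => mem_Icc_of_mem_stateSpace hx.1 hx.2
  have ha : ContinuousOn (fun x : (ℝ × ℝ × ℝ) × ℝ => a x.2) S :=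
    h.continuousOn_proceeds.comp continuousOn_snd sold_mem
  have hb : ContinuousOn (fun x : (ℝ × ℝ × ℝ) × ℝ => b x.2) S :=
    h.continuousOn_price.comp continuousOn_snd sold_mem
  have h_afterSale : ContinuousOn (fun x : (ℝ × ℝ × ℝ) × ℝ => afterSale a b x.1 x.2) S := by
    have hw : ContinuousOn (fun x : (ℝ × ℝ × ℝ) × ℝ => x.1.1) S := by fun_prop
    have hφ : ContinuousOn (fun x : (ℝ × ℝ × ℝ) × ℝ => x.1.2.1) S := by fun_prop
    have hs : ContinuousOn (fun x : (ℝ × ℝ × ℝ) × ℝ => x.1.2.2) S := by fun_prop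
    exact (hw.add (ha.mul hs)).prodMk ((hφ.sub continuousOn_snd).prodMk (hs.mul hb))
  exact hv.comp h_afterSale fun x hx => h.afterSale_mem hx.1 hx.2

theorem exists_saleValue_le (h : PriceImpact Φ₀ a b) {C m : ℝ} (hC : 0 < C) (hm : 0 ≤ m)
    (hv : MonotoneOn v (stateSpace Φ₀))
    (growth : ∀ p ∈ stateSpace Φ₀, v p ≤ C * (1 + |p.1| ^ m + p.2.2 ^ m)) :
    ∃ C' : ℝ, 0 < C' ∧
      ∀ p ∈ stateSpace Φ₀, saleValue a b v p ≤ C' * (1 + |p.1| ^ m + p.2.2 ^ m) := by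
  obtain ⟨A, B, hA, hB, hAB⟩ := h.exists_apply_afterSale_le hv
  refine ⟨C * (1 + 2 ^ m * (1 + A ^ m) + B ^ m), by positivity,
    fun p hp => saleValue_le hp.1.1 fun ψ hψ => ?_⟩
  calc v (afterSale a b p ψ) ≤ v (p.1 + A * p.2.2, p.2.1, p.2.2 * B) := hAB p hp ψ hψ
    _ ≤ C * (1 + |p.1 + A * p.2.2| ^ m + (p.2.2 * B) ^ m) :=
        growth _ ⟨hp.1, mul_nonneg hp.2 hB⟩
    _ ≤ C * ((1 + 2 ^ m * (1 + A ^ m) + B ^ m) * (1 + |p.1| ^ m + p.2.2 ^ m)) := by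
        gcongr
        exact one_add_abs_add_rpow_add_mul_rpow_le hA hB hp.2 hm p.1
    _ = C * (1 + 2 ^ m * (1 + A ^ m) + B ^ m) * (1 + |p.1| ^ m + p.2.2 ^ m) :=
        (mul_assoc _ _ _).symm

end PriceImpact

theorem priceImpact_exp (Φ₀ c : ℝ) :
    PriceImpact Φ₀ (fun ψ => ∫ x in (0 : ℝ)..ψ, exp (-(c * x))) (fun x => exp (-(c * x))) :=
  .of_continuous (by fun_prop) (fun _ _ => (exp_pos _).le) (by simp)

theorem integral_exp_neg_mul {c : ℝ} (hc : c ≠ 0) (ψ : ℝ) :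
    ∫ x in (0 : ℝ)..ψ, exp (-(c * x)) = (1 - exp (-(c * ψ))) / c := by
  simp only [← neg_mul]
  rw [intervalIntegral.integral_comp_mul_left exp (neg_ne_zero.2 hc), integral_exp, mul_zero,
    exp_zero, smul_eq_mul]
  field_simp
  ring

/-- Writing the proceeds as the integral of the marginal price `exp (-(c * x))` unites the cases
`c = 0` and `c ≠ 0`. -/
theorem Ju_eq_saleValue (c : ℝ) (u : ℝ → ℝ → ℝ → ℝ) (w φ s : ℝ) :
    Ju c u w φ s =
      saleValue (fun ψ => ∫ x in (0 : ℝ)..ψ, exp (-(c * x))) (fun ψ => exp (-(c * ψ))) ↿u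
        (w, φ, s) := by
  by_cases hc : c = 0
  · simp [Ju, saleValue, afterSale, hc, Function.HasUncurry.uncurry]
  · simp [Ju, saleValue, afterSale, hc, integral_exp_neg_mul hc, Function.HasUncurry.uncurry]

theorem Ju_mem_C_general {Φ₀ : ℝ} {u : ℝ → ℝ → ℝ → ℝ} {Cu mu : ℝ} (hCu : 0 < Cu) (hmu : 0 < mu)
    (hu : MemC Φ₀ u Cu mu) (c : ℝ) :
    (∀ w φ s, φ ∈ Set.Icc 0 Φ₀ → 0 ≤ s → u w φ s ≤ Ju c u w φ s) ∧
    ∃ C' m' : ℝ, 0 < C' ∧ 0 < m' ∧ MemC Φ₀ (Ju c u) C' m' := by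
  obtain ⟨nonneg, cont, mono, growth⟩ := memC_iff.1 hu
  have impact := priceImpact_exp Φ₀ c
  have uncurry_Ju : ↿(Ju c u) = saleValue _ _ ↿u := funext fun p => Ju_eq_saleValue c u _ _ _
  have le_Ju : ∀ p ∈ stateSpace Φ₀, ↿u p ≤ ↿(Ju c u) p := fun p hp => by
    rw [uncurry_Ju]
    exact impact.self_le_saleValue mono hp
  obtain ⟨C', hC', growth'⟩ := impact.exists_saleValue_le hCu hmu.le mono growth
  refine ⟨fun w φ s hφ hs => le_Ju (w, φ, s) ⟨hφ, hs⟩, C', mu, hC', hmu, memC_iff.2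
    ⟨fun p hp => (nonneg p hp).trans (le_Ju p hp), ?_⟩⟩
  rw [uncurry_Ju]
  exact ⟨impact.continuousOn_saleValue cont, impact.monotoneOn_saleValue mono, growth'⟩

/-- Properties of `Ju`: (a) `Ju ≥ u` on `D`; and `Ju` is non-negative,
continuous on `D`, non-decreasing in each variable, and of polynomial growth,
i.e. `Ju ∈ 𝒞`. -/
theorem Ju_mem_C
    (Φ₀ : ℝ) (hΦ₀ : 0 < Φ₀)
    (u : ℝ → ℝ → ℝ → ℝ) (Cu mu : ℝ) (hCu : 0 < Cu) (hmu : 0 < mu)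
    (hu : MemC Φ₀ u Cu mu)
    (c : ℝ) (hc : 0 ≤ c) :
    (∀ w φ s, φ ∈ Set.Icc 0 Φ₀ → 0 ≤ s → u w φ s ≤ Ju c u w φ s) ∧
    ∃ C' m' : ℝ, 0 < C' ∧ 0 < m' ∧ MemC Φ₀ (Ju c u) C' m' :=
  Ju_mem_C_general hCu hmu hu c
end
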